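/- arXiv:0901.1298 — 3 statements merged into one kernel-verified Lean document; each statement's English description precedes it below -/
import Mathlib

section
/- The total F₂-dimension of the cohomology ker(D+d)/im(D+d) of the complex (SC(T), D+d) equals 1 if T admits a perfect matching, and equals 0 otherwise; in particular it is at most 1. -/
open Polynomial Matrix

attribute [local instance] Classical.propDecidable

namespace Seifert

variable {V : Type} [Fintype V]

/-- A matching of a graph `G`: a finite set of edges of `G` that are pairwise disjoint. -/
def IsMatching (G : SimpleGraph V) (R : Finset (Sym2 V)) : Prop :=
  (∀ e ∈ R, e ∈ G.edgeSet) ∧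
    ∀ e ∈ R, ∀ f ∈ R, e ≠ f → ∀ v : V, v ∈ e → v ∉ f

/-- A perfect matching: a matching covering every vertex. -/
def IsPerfectMatching (G : SimpleGraph V) (R : Finset (Sym2 V)) : Prop :=
  IsMatching G R ∧ ∀ v : V, ∃ e ∈ R, v ∈ e

/-- A configuration on `G`: a matching (the set of red edges) together with an assignment
of a sign (`true` = plus, `false` = minus) to every vertex not covered by a red edge;
vertices covered by a red edge get `none`. -/
structure Config (G : SimpleGraph V) where
  red : Finset (Sym2 V)
  matching : IsMatching G red
  sign : V → Option Bool
  sign_none : ∀ v : V, sign v = none ↔ ∃ e ∈ red, v ∈ e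

instance (G : SimpleGraph V) : Finite (Config G) :=
  Finite.of_injective (fun C => (C.red, C.sign)) (by
    rintro ⟨r, hr, s, hs⟩ ⟨r', hr', s', hs'⟩ h
    simp only [Prod.mk.injEq] at h
    obtain ⟨h1, h2⟩ := h
    subst h1; subst h2; rfl)

noncomputable instance (G : SimpleGraph V) : Fintype (Config G) := Fintype.ofFinite _

/-- The grading `Q`: the number of minuses. -/
noncomputable def Qg {G : SimpleGraph V} (C : Config G) : ℕ :=
  (Finset.univ.filter fun v : V => C.sign v = some false).card

/-- The grading `E`: the number of minuses plus the number of red edges. -/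
noncomputable def Eg {G : SimpleGraph V} (C : Config G) : ℕ := Qg C + C.red.card

/-- `DStep C C'` holds iff `C'` is one of the summands of `D(C)`: it is obtained from `C`
by deleting one red edge `e` and assigning a plus to one endpoint of `e` and a minus to
the other. -/
def DStep {G : SimpleGraph V} (C C' : Config G) : Prop :=
  ∃ e ∈ C.red, C'.red = C.red.erase e ∧
    (∀ x : V, x ∉ e → C'.sign x = C.sign x) ∧
    ∃ u v : V, e = s(u, v) ∧ C'.sign u = some true ∧ C'.sign v = some false

/-- `dStep C C'` holds iff `C'` is one of the summands of `d(C)`: it is obtained from `C`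
by changing the sign of one vertex from plus to minus. -/
def dStep {G : SimpleGraph V} (C C' : Config G) : Prop :=
  C'.red = C.red ∧ ∃ w : V, C.sign w = some true ∧ C'.sign w = some false ∧
    ∀ x : V, x ≠ w → C'.sign x = C.sign x

/-- The linear map on spaces of `F₂`-valued functions induced by a relation `r`:
the basis vector of `a` is sent to the sum of the basis vectors of all `b` with `r a b`. -/
noncomputable def sumLin {α β : Type} [Fintype α] (r : α → β → Prop) :
    (α → ZMod 2) →ₗ[ZMod 2] (β → ZMod 2) where
  toFun f b := ∑ a : α, if r a b then f a else 0
  map_add' f g := by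
    funext b
    simp only [Pi.add_apply]
    rw [← Finset.sum_add_distrib]
    exact Finset.sum_congr rfl fun a _ => by by_cases h : r a b <;> simp [h]
  map_smul' c f := by
    funext b
    simp only [RingHom.id_apply, Pi.smul_apply, smul_eq_mul, Finset.mul_sum]
    exact Finset.sum_congr rfl fun a _ => by by_cases h : r a b <;> simp [h]

/-- The differential `D` on the total Seifert complex `SC(T)`. -/
noncomputable def Dmap (G : SimpleGraph V) :
    (Config G → ZMod 2) →ₗ[ZMod 2] (Config G → ZMod 2) :=
  sumLin DStep

/-- The differential `d` on the total Seifert complex `SC(T)`. -/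
noncomputable def dmap (G : SimpleGraph V) :
    (Config G → ZMod 2) →ₗ[ZMod 2] (Config G → ZMod 2) :=
  sumLin dStep

/-- The graded piece `SC^k(T,n)`: the `F₂`-vector space with basis the configurations
with `Q = k` and `E = n`. -/
abbrev SC (G : SimpleGraph V) (k n : ℤ) : Type :=
  {C : Config G // (Qg C : ℤ) = k ∧ (Eg C : ℤ) = n} → ZMod 2

/-- The differential `D` between graded pieces. (Mathematically it is nonzero only
from `SC^k(T,n)` to `SC^{k+1}(T,n)`.) -/
noncomputable def Dgr (G : SimpleGraph V) (k n k' n' : ℤ) :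
    SC G k n →ₗ[ZMod 2] SC G k' n' :=
  sumLin fun C C' => DStep C.1 C'.1

/-- The dimension of the cohomology `ker g / im f` at the middle term of `A —f→ B —g→ C`
(taking the image of `f` intersected with the kernel of `g`). -/
noncomputable def cohDim {A B M : Type} [AddCommGroup A] [AddCommGroup B] [AddCommGroup M]
    [Module (ZMod 2) A] [Module (ZMod 2) B] [Module (ZMod 2) M]
    (f : A →ₗ[ZMod 2] B) (g : B →ₗ[ZMod 2] M) : ℕ :=
  Module.finrank (ZMod 2)
    (LinearMap.ker g ⧸ (LinearMap.range f).comap (LinearMap.ker g).subtype)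

/-- The dimension of the Seifert cohomology `SH^k(T,n)`. -/
noncomputable def SHdim (G : SimpleGraph V) (k n : ℤ) : ℕ :=
  cohDim (Dgr G (k - 1) n k n) (Dgr G k n (k + 1) n)

/-- The Seifert matrix of a graph with respect to an enumeration of its vertices. -/
noncomputable def seifertMatrix (G : SimpleGraph V) {m : ℕ} (e : V ≃ Fin m) :
    Matrix (Fin m) (Fin m) ℤ := fun i j =>
  if i = j then -1 else if i < j ∧ G.Adj (e.symm i) (e.symm j) then 1 else 0

/-- The Alexander polynomial `det (t S - Sᵀ)` of a graph with respect to an enumeration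
of its vertices. -/
noncomputable def alexDet (G : SimpleGraph V) {m : ℕ} (e : V ≃ Fin m) : Polynomial ℤ :=
  let S : Matrix (Fin m) (Fin m) (Polynomial ℤ) :=
    (seifertMatrix G e).map fun a => (Polynomial.C a : Polynomial ℤ)
  ((X : Polynomial ℤ) • S - Sᵀ).det

/-- The Alexander polynomial of a graph (or forest), defined as the matching polynomial
`Σ_R t^{|R|} (1-t)^{V - 2|R|}`, the sum being over all matchings `R`. -/
noncomputable def alexMatch (G : SimpleGraph V) : Polynomial ℤ :=
  ∑ R : {R : Finset (Sym2 V) // IsMatching G R},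
    X ^ R.1.card * (1 - X) ^ (Fintype.card V - 2 * R.1.card)


/-! ### Generalities on `sumLin` -/

lemma sumLin_apply {α β : Type} [Fintype α] (r : α → β → Prop) (f : α → ZMod 2) (b : β) :
    sumLin r f b = ∑ a : α, if r a b then f a else 0 := rfl

lemma sumLin_comp {α β γ : Type} [Fintype α] [Fintype β] (r : α → β → Prop) (s : β → γ → Prop)
    (t : α → γ → Prop) (h1 : ∀ a b c, r a b → s b c → t a c)
    (h2 : ∀ a c, t a c → ∃! b, r a b ∧ s b c) (f : α → ZMod 2) :
    sumLin s (sumLin r f) = sumLin t f := by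
  funext c
  simp only [sumLin_apply]
  have : ∀ b, (if s b c then ∑ a, (if r a b then f a else 0) else 0)
      = ∑ a, if r a b ∧ s b c then f a else 0 := by
    intro b
    by_cases hs : s b c <;> simp [hs]
  simp only [this]
  rw [Finset.sum_comm]
  refine Finset.sum_congr rfl fun a _ => ?_
  by_cases ht : t a c
  · obtain ⟨b, hb, hu⟩ := h2 a c ht
    rw [if_pos ht, Finset.sum_eq_single b]
    · rw [if_pos hb]
    · intro b' _ hne
      rw [if_neg fun hh => hne (hu b' hh)]
    · simp
  · rw [if_neg ht]
    refine Finset.sum_eq_zero fun b _ => ?_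
    rw [if_neg fun hh => ht (h1 a b c hh.1 hh.2)]

/-! ### Configurations -/

lemma Config.ext' {G : SimpleGraph V} {A B : Config G} (h1 : A.red = B.red)
    (h2 : A.sign = B.sign) : A = B := by
  obtain ⟨r, hr, s, hs⟩ := A
  obtain ⟨r', hr', s', hs'⟩ := B
  simp only at h1 h2
  subst h1; subst h2; rfl

/-- Change the sign of an uncovered vertex. -/
noncomputable def Config.set {G : SimpleGraph V} (C : Config G) (w : V) (b : Bool) : Config G where
  red := C.red
  matching := C.matching
  sign := fun x => if x = w ∧ C.sign w ≠ none then some b else C.sign x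
  sign_none := by
    intro v
    rw [← C.sign_none v]
    split_ifs with h
    · obtain ⟨rfl, h⟩ := h
      simp [h]
    · rfl

lemma Config.set_red {G : SimpleGraph V} (C : Config G) (w : V) (b : Bool) :
    (C.set w b).red = C.red := rfl

lemma Config.set_sign {G : SimpleGraph V} (C : Config G) (w : V) (b : Bool) (x : V) :
    (C.set w b).sign x = if x = w ∧ C.sign w ≠ none then some b else C.sign x := rfl

lemma red_unique {G : SimpleGraph V} (C : Config G) {e f : Sym2 V} (he : e ∈ C.red)
    (hf : f ∈ C.red) {v : V} (hv : v ∈ e) (hv' : v ∈ f) : e = f := by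
  by_contra hne
  exact C.matching.2 e he f hf hne v hv hv'

/-- Delete the red edge `uw`, with plus at `u` and minus at `w`. -/
noncomputable def Config.del {G : SimpleGraph V} (C : Config G) (u w : V)
    (h : s(u, w) ∈ C.red) : Config G where
  red := C.red.erase s(u, w)
  matching := ⟨fun e he => C.matching.1 e (Finset.mem_of_mem_erase he),
    fun e he f hf => C.matching.2 e (Finset.mem_of_mem_erase he) f (Finset.mem_of_mem_erase hf)⟩
  sign := fun x => if x = w then some false else if x = u then some true else C.sign x
  sign_none := by
    intro v
    by_cases hw : v ∈ s(u, w)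
    · have : ¬ ∃ e ∈ C.red.erase s(u, w), v ∈ e := by
        rintro ⟨e, he, hv⟩
        rw [Finset.mem_erase] at he
        exact he.1 (red_unique C he.2 h hv hw)
      simp only [this, iff_false]
      rw [Sym2.mem_iff] at hw
      split_ifs <;> simp_all
    · have h1 : v ≠ w := by rintro rfl; simp at hw
      have h2 : v ≠ u := by rintro rfl; simp at hw
      rw [if_neg h1, if_neg h2, C.sign_none v]
      constructor
      · rintro ⟨e, he, hv⟩
        refine ⟨e, Finset.mem_erase.2 ⟨?_, he⟩, hv⟩
        rintro rfl
        exact hw hv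
      · rintro ⟨e, he, hv⟩
        exact ⟨e, Finset.mem_of_mem_erase he, hv⟩

/-- Replacing some of the red edges by pairs of pluses. -/
def EStep {G : SimpleGraph V} (A B : Config G) : Prop :=
  B.red ⊆ A.red ∧ ∀ x, A.sign x = B.sign x ∨ (A.sign x = none ∧ B.sign x = some true)

/-- The composition of `EStep` and `dStep`. -/
def TStep {G : SimpleGraph V} (A B : Config G) : Prop :=
  B.red ⊆ A.red ∧ ∃ w, B.sign w = some false ∧ A.sign w ≠ some false ∧
    ∀ x, x ≠ w → A.sign x = B.sign x ∨ (A.sign x = none ∧ B.sign x = some true)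

/-- The steps of `D + d`. -/
def aStep {G : SimpleGraph V} (A B : Config G) : Prop := DStep A B ∨ dStep A B

lemma add_eq_sumLin (G : SimpleGraph V) : Dmap G + dmap G = sumLin aStep := by
  refine LinearMap.ext fun f => ?_
  funext C
  change Dmap G _ C + dmap G _ C = _
  simp only [Dmap, dmap]
  rw [sumLin_apply, sumLin_apply, sumLin_apply, ← Finset.sum_add_distrib]
  refine Finset.sum_congr rfl fun A _ => ?_
  by_cases h1 : DStep A C
  · have h2 : ¬ dStep A C := by
      rintro ⟨h2, -⟩
      obtain ⟨e, he, h1, -⟩ := h1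
      rw [← h2, h1] at he
      simp at he
    simp [aStep, h1, h2]
  · simp [aStep, h1]

lemma dE_comp {G : SimpleGraph V} (f : Config G → ZMod 2) :
    sumLin dStep (sumLin EStep f) = (sumLin TStep f : Config G → ZMod 2) := by
  apply sumLin_comp
  · rintro A C B ⟨h1, h2⟩ ⟨h3, w, h4, h5, h6⟩
    refine ⟨h3 ▸ h1, w, h5, ?_, ?_⟩
    · rcases h2 w with h | h
      · rw [h, h4]; simp
      · rw [h.1]; simp
    · intro x hx
      rw [h6 x hx]
      exact h2 x
  · rintro A B ⟨h1, w, h2, h3, h4⟩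
    refine ⟨B.set w true, ⟨⟨h1, ?_⟩, rfl, w, ?_, h2, ?_⟩, ?_⟩
    · intro x
      rw [Config.set_sign]
      by_cases hx : x = w
      · subst hx
        have : A.sign x = some true ∨ A.sign x = none := by
          rcases h : A.sign x with _ | _ | _ <;> simp_all
        simp [h2, this]
      · simp only [hx, false_and, if_false]
        exact h4 x hx
    · simp [Config.set_sign, h2]
    · intro x hx
      simp [Config.set_sign, hx]
    · rintro C ⟨⟨h5, h6⟩, h7, w', h8, h9, h10⟩
      have hw : w' = w := by
        by_contra hne
        have ha := h4 w' hne
        have hb := h6 w'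
        rw [h9] at ha
        rw [h8] at hb
        rcases ha with ha | ha <;> rcases hb with hb | hb <;> simp_all
      subst hw
      refine Config.ext' h7.symm ?_
      funext x
      rw [Config.set_sign]
      by_cases hx : x = w'
      · subst hx
        simp [h2, h8]
      · simp only [hx, false_and, if_false]
        exact (h10 x hx).symm

lemma Ea_comp {G : SimpleGraph V} (f : Config G → ZMod 2) :
    sumLin EStep (sumLin aStep f) = (sumLin TStep f : Config G → ZMod 2) := by
  -- an intermediate step, with its vertex
  have key : ∀ A C B : Config G, aStep A C → EStep C B → ∃ w, C.sign w = some false ∧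
      B.sign w = some false ∧ A.sign w ≠ some false ∧ B.red ⊆ A.red ∧
      (∀ x, x ≠ w → A.sign x = B.sign x ∨ (A.sign x = none ∧ B.sign x = some true)) ∧
      ((A.sign w = some true ∧ C.red = A.red ∧ ∀ x, x ≠ w → C.sign x = A.sign x) ∨
        ∃ u, s(u, w) ∈ A.red ∧ A.sign w = none ∧ C.red = A.red.erase s(u, w) ∧
          C.sign u = some true ∧ ∀ x, x ≠ w → x ≠ u → C.sign x = A.sign x) := by
    rintro A C B (⟨e, he, h1, h2, u, v, rfl, h3, h4⟩ | ⟨h1, w, h2, h3, h4⟩) ⟨h5, h6⟩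
    · have hv : A.sign v = none := (A.sign_none v).2 ⟨_, he, by simp⟩
      have hu : A.sign u = none := (A.sign_none u).2 ⟨_, he, by simp⟩
      refine ⟨v, h4, ?_, ?_, ?_, ?_, Or.inr ⟨u, he, hv, h1, h3, ?_⟩⟩
      · have := h6 v
        rw [h4] at this
        simpa [eq_comm] using this
      · simp [hv]
      · rw [h1] at h5
        exact h5.trans (Finset.erase_subset _ _)
      · intro x hx
        by_cases hxu : x = u
        · subst hxu
          have := h6 x
          rw [h3] at this
          right
          refine ⟨hu, ?_⟩
          simpa [eq_comm] using this
        · rw [← h2 x (by simp [hx, hxu])]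
          exact h6 x
      · intro x hx hxu
        exact h2 x (by simp [hx, hxu])
    · refine ⟨w, h3, ?_, ?_, ?_, ?_, Or.inl ⟨h2, h1, h4⟩⟩
      · have := h6 w
        rw [h3] at this
        simpa [eq_comm] using this
      · simp [h2]
      · rwa [← h1]
      · intro x hx
        rw [← h4 x hx]
        exact h6 x
  apply sumLin_comp
  · intro A C B h1 h2
    obtain ⟨w, h3, h4, h5, h6, h7, -⟩ := key A C B h1 h2
    exact ⟨h6, w, h4, h5, h7⟩
  · rintro A B hT
    refine existsUnique_of_exists_of_unique ?_ ?_
    · obtain ⟨h1, w, h2, h3, h4⟩ := hT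
      rcases h : A.sign w with _ | _ | _
      · obtain ⟨e, he, hwe⟩ := (A.sign_none w).1 h
        obtain ⟨u, rfl⟩ : ∃ u, e = s(u, w) := by
          obtain ⟨u, hu⟩ := Sym2.mem_iff_exists.1 hwe
          exact ⟨u, by rw [hu, Sym2.eq_swap]⟩
        have huw : u ≠ w := by
          have := A.matching.1 _ he
          rw [SimpleGraph.mem_edgeSet] at this
          exact this.ne
        have heB : s(u, w) ∉ B.red := by
          intro hB
          have := (B.sign_none w).2 ⟨_, hB, by simp⟩
          rw [h2] at this
          simp at this
        refine ⟨A.del u w he, Or.inl ⟨s(u, w), he, rfl, ?_, u, w, rfl, ?_, ?_⟩, ?_, ?_⟩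
        · intro x hx
          have hx' : x ≠ u ∧ x ≠ w := by simpa using hx
          simp [Config.del, hx'.1, hx'.2]
        · simp [Config.del, huw]
        · simp [Config.del]
        · intro f hf
          refine Finset.mem_erase.2 ⟨?_, h1 hf⟩
          rintro rfl
          exact heB hf
        · intro x
          simp only [Config.del]
          by_cases hx : x = w
          · subst hx; simp [h2]
          · by_cases hxu : x = u
            · subst hxu
              have hAx : A.sign x = none := (A.sign_none x).2 ⟨_, he, by simp⟩
              rcases h4 x hx with h5 | h5
              · exfalso
                rw [hAx] at h5
                obtain ⟨f, hf, hxf⟩ := (B.sign_none x).1 h5.symm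
                have := red_unique A he (h1 hf) (by simp) hxf
                exact heB (this ▸ hf)
              · simp [hx, h5.2]
            · simp only [hx, hxu, if_false]
              exact h4 x hx
      · exact absurd h h3
      · refine ⟨A.set w false, Or.inr ⟨rfl, w, h, ?_, ?_⟩, h1, ?_⟩
        · simp [Config.set_sign, h]
        · intro x hx
          simp [Config.set_sign, hx]
        · intro x
          rw [Config.set_sign]
          by_cases hx : x = w
          · subst hx; simp [h, h2]
          · simp only [hx, false_and, if_false]
            exact h4 x hx
    · rintro C C' ⟨h1, h2⟩ ⟨h1', h2'⟩
      obtain ⟨w, a1, a2, a3, a4, a5, a6⟩ := key A C B h1 h2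
      obtain ⟨w', b1, b2, b3, b4, b5, b6⟩ := key A C' B h1' h2'
      have hw : w' = w := by
        by_contra hne
        have := a5 w' hne
        rw [b2] at this
        simp [b3] at this
      subst hw
      rcases a6 with ⟨c1, c2, c3⟩ | ⟨u, c1, c2, c3, c4, c5⟩ <;>
        rcases b6 with ⟨d1, d2, d3⟩ | ⟨u', d1, d2, d3, d4, d5⟩
      · refine Config.ext' (c2.trans d2.symm) ?_
        funext x
        by_cases hx : x = w'
        · rw [hx, a1, b1]
        · rw [c3 x hx, d3 x hx]
      · simp [c1] at d2
      · simp [d1] at c2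
      · have he := red_unique A c1 d1 (v := w') (by simp) (by simp)
        have hu : u = u' := by
          rcases (by simpa using he : u = u' ∨ u = w' ∧ w' = u') with h | h
          · exact h
          · exact h.1.trans h.2
        subst hu
        refine Config.ext' (c3.trans d3.symm) ?_
        funext x
        by_cases hx : x = w'
        · rw [hx, a1, b1]
        · by_cases hxu : x = u
          · rw [hxu, c4, d4]
          · rw [c5 x hx hxu, d5 x hx hxu]

lemma EStep.eq_of_card {G : SimpleGraph V} {A B : Config G} (h : EStep A B)
    (hc : A.red.card ≤ B.red.card) : A = B := by
  have hr : B.red = A.red := Finset.eq_of_subset_of_card_le h.1 hc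
  refine Config.ext' hr.symm ?_
  funext x
  rcases h.2 x with h | ⟨h3, h4⟩
  · exact h
  · exfalso
    rw [A.sign_none x, ← hr, ← B.sign_none x, h4] at h3
    simp at h3

lemma EStep.refl {G : SimpleGraph V} (A : Config G) : EStep A A :=
  ⟨Finset.Subset.refl _, fun _ => Or.inl rfl⟩

lemma E_apply_of {G : SimpleGraph V} (f : Config G → ZMod 2) (C : Config G)
    (h : ∀ A, C.red.card < A.red.card → EStep A C → f A = 0) : sumLin EStep f C = f C := by
  rw [sumLin_apply, Finset.sum_eq_single C]
  · rw [if_pos (EStep.refl C)]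
  · intro A _ hne
    split_ifs with hE
    · apply h A _ hE
      by_contra hlt
      exact hne (hE.eq_of_card (not_lt.1 hlt))
    · rfl
  · simp

lemma E_injective {G : SimpleGraph V} :
    Function.Injective (sumLin EStep : (Config G → ZMod 2) →ₗ[ZMod 2] (Config G → ZMod 2)) := by
  rw [← LinearMap.ker_eq_bot, LinearMap.ker_eq_bot']
  intro f hf
  obtain ⟨N, hN⟩ : ∃ N, ∀ C : Config G, C.red.card ≤ N :=
    ⟨Finset.univ.sup fun C : Config G => C.red.card, fun C =>
      Finset.le_sup (f := fun C : Config G => C.red.card) (Finset.mem_univ C)⟩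
  have : ∀ k, ∀ C : Config G, N ≤ C.red.card + k → f C = 0 := by
    intro k
    induction k with
    | zero =>
      intro C hC
      rw [← E_apply_of f C, hf]; · rfl
      intro A hA _
      have := hN A
      omega
    | succ k ih =>
      intro C hC
      rw [← E_apply_of f C, hf]; · rfl
      intro A hA _
      exact ih A (by omega)
  funext C
  exact this N C (by omega)

/-! ### The differential `d` -/

lemma d_apply {G : SimpleGraph V} (f : Config G → ZMod 2) (C : Config G) :
    sumLin dStep f C = ∑ w : V, if C.sign w = some false then f (C.set w true) else 0 := by
  rw [sumLin_apply, ← Finset.sum_filter, ← Finset.sum_filter]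
  symm
  refine Finset.sum_bij (fun w _ => C.set w true) ?_ ?_ ?_ ?_
  · intro w hw
    simp only [Finset.mem_filter, Finset.mem_univ, true_and] at hw ⊢
    refine ⟨rfl, w, ?_, hw, ?_⟩
    · simp [Config.set_sign, hw]
    · intro x hx
      simp [Config.set_sign, hx]
  · intro w hw w' hw' h
    simp only [Finset.mem_filter, Finset.mem_univ, true_and] at hw hw'
    by_contra hne
    have := congrArg (fun D : Config G => D.sign w) h
    simp [Config.set_sign, hw, hne] at this
  · intro A hA
    simp only [Finset.mem_filter, Finset.mem_univ, true_and] at hA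
    obtain ⟨h1, w, h2, h3, h4⟩ := hA
    refine ⟨w, by simp [h3], ?_⟩
    refine Config.ext' h1 ?_
    funext x
    rw [Config.set_sign]
    by_cases hx : x = w
    · subst hx; simp [h2, h3]
    · simp [hx, h4 x hx]
  · intro w _
    rfl

/-- A vertex not covered by `R`, if there is one. -/
noncomputable def pivot (R : Finset (Sym2 V)) : Option V :=
  if h : ∃ v : V, ¬ ∃ e ∈ R, v ∈ e then some h.choose else none

lemma pivot_none {R : Finset (Sym2 V)} (h : pivot R = none) (v : V) : ∃ e ∈ R, v ∈ e := by
  unfold pivot at h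
  split_ifs at h with h'
  push Not at h'
  exact h' v

lemma pivot_some {R : Finset (Sym2 V)} {p : V} (h : pivot R = some p) : ¬ ∃ e ∈ R, p ∈ e := by
  unfold pivot at h
  split_ifs at h with h'
  · simp only [Option.some.injEq] at h
    rw [← h]
    exact h'.choose_spec

/-- The contracting homotopy. -/
noncomputable def hty {G : SimpleGraph V} (x : Config G → ZMod 2) : Config G → ZMod 2 := fun C =>
  match pivot C.red with
  | none => 0
  | some p => if C.sign p = some true then x (C.set p false) else 0

lemma hty_some {G : SimpleGraph V} (x : Config G → ZMod 2) (C : Config G) {p : V}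
    (h : pivot C.red = some p) :
    hty x C = if C.sign p = some true then x (C.set p false) else 0 := by
  simp [hty, h]

lemma d_hty {G : SimpleGraph V} (x : Config G → ZMod 2) (hx : sumLin dStep x = 0)
    (h0 : ∀ C : Config G, (∀ v, C.sign v = none) → x C = 0) :
    sumLin dStep (hty x) = x := by
  funext C
  rw [d_apply]
  rcases hp : pivot C.red with _ | p
  · have hC : ∀ v, C.sign v = none := fun v => (C.sign_none v).2 (pivot_none hp v)
    rw [h0 C hC]
    exact Finset.sum_eq_zero fun w _ => by simp [hC w]
  · have hpn : C.sign p ≠ none := fun h => pivot_some hp ((C.sign_none p).1 h)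
    have hh : ∀ w, hty x (C.set w true) = if (C.set w true).sign p = some true then
        x ((C.set w true).set p false) else 0 := fun w => hty_some x _ hp
    simp only [hh]
    rcases h : C.sign p with _ | _ | _
    · exact absurd h hpn
    · rw [Finset.sum_eq_single p]
      · rw [if_pos h, if_pos (by simp [Config.set_sign, h])]
        congr 1
        refine Config.ext' rfl ?_
        funext y
        by_cases hy : y = p
        · subst hy; simp [Config.set_sign, h]
        · simp [Config.set_sign, hy]
      · intro w _ hw
        have : (C.set w true).sign p = some false := by
          simp [Config.set_sign, hw.symm, h]
        simp [this]
      · simp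
    · have h1 := congrFun hx (C.set p false)
      rw [d_apply, ← Finset.add_sum_erase _ _ (Finset.mem_univ p)] at h1
      rw [← Finset.add_sum_erase _ _ (Finset.mem_univ p)]
      have e1 : (C.set p false).set p true = C := by
        refine Config.ext' rfl ?_
        funext y
        by_cases hy : y = p
        · subst hy; simp [Config.set_sign, h]
        · simp [Config.set_sign, hy]
      have e2 : (C.set p false).sign p = some false := by simp [Config.set_sign, h]
      rw [if_pos e2, e1] at h1
      rw [if_neg (by simp [h]), zero_add]
      have e3 : ∀ w ∈ Finset.univ.erase p,
          (if C.sign w = some false then (if (C.set w true).sign p = some true then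
            x ((C.set w true).set p false) else 0) else 0) =
          (if (C.set p false).sign w = some false then x ((C.set p false).set w true) else 0) := by
        intro w hw
        have hw : w ≠ p := (Finset.mem_erase.1 hw).1
        have f1 : (C.set w true).sign p = some true := by simp [Config.set_sign, hw.symm, h]
        have f2 : (C.set p false).sign w = C.sign w := by simp [Config.set_sign, hw]
        rw [if_pos f1, f2]
        split_ifs with hf
        · congr 1
          refine Config.ext' rfl ?_
          funext y
          by_cases hy : y = p
          · subst hy; simp [Config.set_sign, h, hw.symm]
          · by_cases hyw : y = w
            · subst hyw; simp [Config.set_sign, hy, hf]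
            · simp [Config.set_sign, hy, hyw]
        · rfl
      rw [Finset.sum_congr rfl e3]
      have h2 : x C + _ = 0 := h1
      rw [eq_comm, ← sub_eq_zero, CharTwo.sub_eq_add]
      exact h2

/-! ### Uniqueness of perfect matchings in trees -/

/-- The subgraph of a perfect matching. -/
def toSub (G : SimpleGraph V) (R : Finset (Sym2 V)) (hR : IsMatching G R) : G.Subgraph where
  verts := Set.univ
  Adj u v := s(u, v) ∈ R
  adj_sub := fun h => hR.1 _ h
  edge_vert := fun _ => Set.mem_univ _
  symm := ⟨fun u v h => by rwa [Sym2.eq_swap]⟩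

lemma toSub_perfect {G : SimpleGraph V} {R : Finset (Sym2 V)} (h : IsPerfectMatching G R) :
    (toSub G R h.1).IsPerfectMatching := by
  rw [SimpleGraph.Subgraph.isPerfectMatching_iff]
  intro v
  obtain ⟨e, he, hv⟩ := h.2 v
  obtain ⟨w, rfl⟩ := Sym2.mem_iff_exists.1 hv
  refine ⟨w, he, ?_⟩
  intro w' (hw' : s(v, w') ∈ R)
  by_contra hne
  refine h.1.2 _ he _ hw' ?_ v (by simp) (by simp)
  intro heq
  apply hne
  rcases (by simpa using heq.symm : w' = w ∨ v = w ∧ w' = v) with h | h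
  · exact h
  · exact h.2.trans h.1

lemma perfect_unique {G : SimpleGraph V} (hG : G.IsTree) {R R' : Finset (Sym2 V)}
    (h : IsPerfectMatching G R) (h' : IsPerfectMatching G R') : R = R' := by
  have hc := (toSub_perfect h).symmDiff_isCycles (toSub_perfect h')
  set H := symmDiff (toSub G R h.1).spanningCoe (toSub G R' h'.1).spanningCoe with hH
  have hadj : ∀ u v, H.Adj u v ↔ (s(u, v) ∈ R ∧ s(u, v) ∉ R') ∨ (s(u, v) ∈ R' ∧ s(u, v) ∉ R) := by
    intro u v
    rw [hH, symmDiff_def]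
    simp [toSub]
  have hle : H ≤ G := by
    intro u v huv
    rcases (hadj u v).1 huv with h1 | h1
    · exact h.1.1 _ h1.1
    · exact h'.1.1 _ h1.1
  have hno : ∀ u v, ¬ H.Adj u v := by
    intro u v huv
    have hr := SimpleGraph.IsCycles.reachable_deleteEdges huv hc
    have hb := SimpleGraph.isAcyclic_iff_forall_adj_isBridge.1 hG.isAcyclic (hle huv)
    rw [SimpleGraph.isBridge_iff] at hb
    exact hb (hr.mono (SimpleGraph.deleteEdges_mono hle))
  ext e
  induction e using Sym2.ind with
  | _ u v =>
    have := hno u v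
    rw [hadj] at this
    tauto

/-! ### The main theorem -/

lemma total_aux {G : SimpleGraph V} (x : Config G → ZMod 2) (hx : sumLin aStep x = 0)
    (h0 : ∀ C : Config G, (∀ v, C.sign v = none) → sumLin EStep x C = 0) :
    x ∈ LinearMap.range (sumLin aStep : (Config G → ZMod 2) →ₗ[ZMod 2] (Config G → ZMod 2)) := by
  have h1 : sumLin dStep (sumLin EStep x) = 0 := by
    rw [dE_comp, ← Ea_comp, hx, map_zero]
  have h2 := d_hty _ h1 h0
  obtain ⟨z, hz⟩ := (LinearMap.injective_iff_surjective.1 (E_injective (G := G)))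
    (hty (sumLin EStep x))
  refine ⟨z, E_injective ?_⟩
  rw [Ea_comp, ← dE_comp, hz, h2]

lemma no_aStep {G : SimpleGraph V} {A C : Config G} (hC : ∀ v, C.sign v = none) :
    ¬ aStep A C := by
  rintro (⟨e, he, h1, h2, u, v, rfl, h3, h4⟩ | ⟨h1, w, h2, h3, h4⟩)
  · simp [hC] at h3
  · simp [hC] at h3

/-- the total dimension of the cohomology of `(SC(T), D + d)` is `1` if `T`
admits a perfect matching and `0` otherwise. -/
theorem total_cohomology_dim (G : SimpleGraph V) (hG : G.IsTree) :
    cohDim (Dmap G + dmap G) (Dmap G + dmap G) =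
      if ∃ R : Finset (Sym2 V), IsPerfectMatching G R then 1 else 0 := by
  rw [add_eq_sumLin]
  unfold cohDim
  split_ifs with hP
  · obtain ⟨R, hR⟩ := hP
    let C₀ : Config G := ⟨R, hR.1, fun _ => none, fun v => by simpa using hR.2 v⟩
    have hC₀ : ∀ v, C₀.sign v = none := fun _ => rfl
    have huniq : ∀ C : Config G, (∀ v, C.sign v = none) → C = C₀ := by
      intro C hC
      refine Config.ext' (perfect_unique hG ⟨C.matching, fun v => (C.sign_none v).1 (hC v)⟩ hR) ?_
      funext v
      rw [hC v]
    have hE : ∀ x : Config G → ZMod 2, sumLin EStep x C₀ = x C₀ := by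
      intro x
      refine E_apply_of x C₀ ?_
      intro A hA hst
      exfalso
      have : A = C₀ := by
        apply huniq
        intro v
        rcases hst.2 v with h | h
        · exact h
        · exact h.1
      rw [this] at hA
      exact lt_irrefl _ hA
    let φ : LinearMap.ker (sumLin aStep : (Config G → ZMod 2) →ₗ[ZMod 2] (Config G → ZMod 2))
        →ₗ[ZMod 2] ZMod 2 := (LinearMap.proj C₀).comp (Submodule.subtype _)
    have hφ : ∀ x, φ x = x.1 C₀ := fun _ => rfl
    have hker : (LinearMap.range (sumLin aStep)).comap (LinearMap.ker (sumLin aStep)).subtype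
        = LinearMap.ker φ := by
      ext ⟨x, hx⟩
      rw [Submodule.mem_comap, LinearMap.mem_ker, hφ]
      constructor
      · rintro ⟨y, hy⟩
        change sumLin aStep y = x at hy
        change x C₀ = 0
        rw [← hy, sumLin_apply]
        exact Finset.sum_eq_zero fun A _ => if_neg (no_aStep hC₀)
      · intro (h : x C₀ = 0)
        refine total_aux x hx ?_
        intro C hC
        rw [huniq C hC, hE, h]
    have hsurj : Function.Surjective φ := by
      obtain ⟨z, hz⟩ := (LinearMap.injective_iff_surjective.1 (E_injective (G := G)))
        (Pi.single C₀ 1)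
      have hz0 : sumLin aStep z = 0 := by
        apply E_injective
        rw [Ea_comp, ← dE_comp, hz, map_zero]
        funext C
        rw [d_apply]
        refine Finset.sum_eq_zero fun w _ => ?_
        split_ifs with hw
        · rw [Pi.single_eq_of_ne]
          intro h
          have := congrArg (fun D : Config G => D.sign w) h
          simp [Config.set_sign, hw, hC₀] at this
        · rfl
      have hz1 : z C₀ = 1 := by
        rw [← hE z, hz, Pi.single_eq_same]
      intro c
      refine ⟨c • ⟨z, hz0⟩, ?_⟩
      rw [map_smul, hφ]
      change c • z C₀ = c
      rw [hz1]
      simp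
    rw [hker, (φ.quotKerEquivOfSurjective hsurj).finrank_eq]
    exact Module.finrank_self _
  · have htop : (LinearMap.range (sumLin aStep)).comap
        (LinearMap.ker (sumLin (aStep (G := G)))).subtype = ⊤ := by
      rw [eq_top_iff]
      rintro ⟨x, hx⟩ -
      refine total_aux x hx ?_
      intro C hC
      exact absurd ⟨C.red, C.matching, fun v => (C.sign_none v).1 (hC v)⟩ hP
    rw [htop]
    exact Module.finrank_zero_of_subsingleton

end Seifert
end

section
/- For every finite tree T with V vertices, enumerated 1,…,V, with Seifert matrix S, the graded Euler characteristic of the Seifert cohomology equals det(tS − Sᵀ); that is, in ℤ[t], Σ_{k,n} (−1)^k t^n dim SH^k(T,n) = det(tS − Sᵀ). -/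
open Polynomial Matrix

attribute [local instance] Classical.propDecidable

namespace Seifert

variable {V : Type} [Fintype V]

lemma DStep_sign_none {G : SimpleGraph V} {C : Config G} {e : Sym2 V} (he : e ∈ C.red) {x : V}
    (hx : x ∈ e) : C.sign x = none := (C.sign_none x).2 ⟨e, he, hx⟩

lemma config_ext {G : SimpleGraph V} {C D : Config G} (h1 : C.red = D.red)
    (h2 : C.sign = D.sign) : C = D := by
  cases C; cases D; simp_all

lemma DStep_Qg {G : SimpleGraph V} {C C' : Config G} (h : DStep C C') : Qg C' = Qg C + 1 := by
  obtain ⟨e, he, hr, hs, u, v, rfl, hu, hv⟩ := h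
  have hCu : C.sign u = none := DStep_sign_none he (by simp)
  have hCv : C.sign v = none := DStep_sign_none he (by simp)
  have : (Finset.univ.filter fun x : V => C'.sign x = some false) =
      insert v (Finset.univ.filter fun x : V => C.sign x = some false) := by
    ext x
    simp only [Finset.mem_filter, Finset.mem_univ, true_and, Finset.mem_insert]
    by_cases hxv : x = v
    · subst hxv; simp [hv]
    by_cases hxu : x = u
    · subst hxu; simp [hu, hCu, hxv]
    rw [hs x (by simp [hxu, hxv])]
    simp [hxv]
  unfold Qg
  rw [this, Finset.card_insert_of_notMem (by simp [hCv])]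

lemma DStep_Eg {G : SimpleGraph V} {C C' : Config G} (h : DStep C C') : Eg C' = Eg C := by
  have hQ := DStep_Qg h
  obtain ⟨e, he, hr, -⟩ := h
  unfold Eg
  rw [hQ, hr, Finset.card_erase_of_mem he]
  have := Finset.card_pos.2 ⟨e, he⟩
  omega

/-- one step removing the specified edge -/
def DStepAt {G : SimpleGraph V} (e : Sym2 V) (C C' : Config G) : Prop :=
  e ∈ C.red ∧ C'.red = C.red.erase e ∧
    (∀ x : V, x ∉ e → C'.sign x = C.sign x) ∧
    ∃ u v : V, e = s(u, v) ∧ C'.sign u = some true ∧ C'.sign v = some false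

lemma DStep_iff {G : SimpleGraph V} {C C' : Config G} : DStep C C' ↔ ∃ e, DStepAt e C C' :=
  Iff.rfl

lemma DStepAt_unique {G : SimpleGraph V} {C C' D' C'' : Config G} {e f f' : Sym2 V}
    (h1 : DStepAt e C C') (h2 : DStepAt f C' C'') (h3 : DStepAt e C D')
    (h4 : DStepAt f' D' C'') : C' = D' := by
  have key : ∀ (C' : Config G) (f : Sym2 V), DStepAt e C C' → DStepAt f C' C'' →
      ∀ x ∈ e, C'.sign x = C''.sign x := by
    intro C' f h1 h2 x hx
    refine (h2.2.2.1 x ?_).symm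
    have hf := h2.1
    rw [h1.2.1, Finset.mem_erase] at hf
    exact C.matching.2 e h1.1 f hf.2 hf.1.symm x hx
  refine config_ext (h1.2.1.trans h3.2.1.symm) ?_
  funext x
  by_cases hx : x ∈ e
  · rw [key C' f h1 h2 x hx, key D' f' h3 h4 x hx]
  · rw [h1.2.2.1 x hx, h3.2.2.1 x hx]

lemma DStepAt_swap {G : SimpleGraph V} {C C' C'' : Config G} {e f : Sym2 V}
    (h1 : DStepAt e C C') (h2 : DStepAt f C' C'') :
    ∃ D, DStepAt f C D ∧ DStepAt e D C'' := by
  have hf := h2.1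
  rw [h1.2.1, Finset.mem_erase] at hf
  have hd : ∀ x, x ∈ e → x ∉ f := fun x hx => C.matching.2 e h1.1 f hf.2 hf.1.symm x hx
  have hns : ∀ x ∈ f, C''.sign x ≠ none := by
    intro x hx hn
    obtain ⟨g, hg, hxg⟩ := (C''.sign_none x).1 hn
    rw [h2.2.1, Finset.mem_erase, h1.2.1, Finset.mem_erase] at hg
    exact C.matching.2 g hg.2.2 f hf.2 hg.1 x hxg hx
  refine ⟨⟨C.red.erase f, ⟨fun g hg => C.matching.1 g (Finset.mem_of_mem_erase hg),
    fun g hg g' hg' => C.matching.2 g (Finset.mem_of_mem_erase hg) g' (Finset.mem_of_mem_erase hg')⟩,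
    fun x => if x ∈ f then C''.sign x else C.sign x, ?_⟩, ?_, ?_⟩
  · intro x
    by_cases hx : x ∈ f
    · simp only [hx, if_true]
      refine ⟨fun h => (hns x hx h).elim, ?_⟩
      rintro ⟨g, hg, hxg⟩
      rw [Finset.mem_erase] at hg
      exact (C.matching.2 g hg.2 f hf.2 hg.1 x hxg hx).elim
    · simp only [hx, if_false]
      rw [C.sign_none]
      constructor
      · rintro ⟨g, hg, hxg⟩
        exact ⟨g, Finset.mem_erase.2 ⟨by rintro rfl; exact hx hxg, hg⟩, hxg⟩
      · rintro ⟨g, hg, hxg⟩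
        exact ⟨g, Finset.mem_of_mem_erase hg, hxg⟩
  · refine ⟨hf.2, rfl, fun x hx => by simp [hx], ?_⟩
    obtain ⟨u, v, huv, hu, hv⟩ := h2.2.2.2
    exact ⟨u, v, huv, by simpa [huv] using hu, by simpa [huv] using hv⟩
  · refine ⟨Finset.mem_erase.2 ⟨hf.1.symm, h1.1⟩, ?_, ?_, ?_⟩
    · rw [h2.2.1, h1.2.1, Finset.erase_right_comm]
    · intro x hx
      by_cases hxf : x ∈ f
      · simp [hxf]
      · simp only [hxf, if_false]
        rw [h2.2.2.1 x hxf, h1.2.2.1 x hx]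
    · obtain ⟨u, v, huv, hu, hv⟩ := h1.2.2.2
      refine ⟨u, v, huv, ?_, ?_⟩
      · rw [h2.2.2.1 u (hd u (by simp [huv])), hu]
      · rw [h2.2.2.1 v (hd v (by simp [huv])), hv]

lemma DD_card {G : SimpleGraph V} (C C'' : Config G) :
    (((Finset.univ.filter fun C' : Config G => DStep C C' ∧ DStep C' C'').card : ℕ) : ZMod 2) = 0 := by
  rcases Finset.eq_empty_or_nonempty
    (Finset.univ.filter fun C' : Config G => DStep C C' ∧ DStep C' C'') with h | ⟨C', h⟩
  · rw [h]; simp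
  · simp only [Finset.mem_filter, Finset.mem_univ, true_and] at h
    obtain ⟨⟨e, h1⟩, ⟨f, h2⟩⟩ := h
    change DStepAt e C C' at h1
    change DStepAt f C' C'' at h2
    obtain ⟨D, h3, h4⟩ := DStepAt_swap h1 h2
    have hf := h2.1
    rw [h1.2.1, Finset.mem_erase] at hf
    have hne : C' ≠ D := by
      rintro rfl
      have := h3.2.1
      rw [h1.2.1] at this
      have h5 : f ∈ C.red.erase e := Finset.mem_erase.2 hf
      rw [this] at h5
      simp at h5
    have : (Finset.univ.filter fun C' : Config G => DStep C C' ∧ DStep C' C'') = {C', D} := by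
      ext B
      simp only [Finset.mem_filter, Finset.mem_univ, true_and, Finset.mem_insert,
        Finset.mem_singleton]
      constructor
      · rintro ⟨⟨e', h5⟩, ⟨f', h6⟩⟩
        change DStepAt e' C B at h5
        change DStepAt f' B C'' at h6
        have hee : e' = e ∨ e' = f := by
          have hn : e' ∉ C''.red := by rw [h6.2.1, h5.2.1]; simp
          rw [h2.2.1, h1.2.1] at hn
          simp only [Finset.mem_erase, h5.1, and_true] at hn
          tauto
        rcases hee with rfl | rfl
        · exact Or.inl (DStepAt_unique h5 h6 h1 h2)
        · exact Or.inr (DStepAt_unique h5 h6 h3 h4)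
      · rintro (rfl | rfl)
        · exact ⟨⟨e, h1⟩, ⟨f, h2⟩⟩
        · exact ⟨⟨f, h3⟩, ⟨e, h4⟩⟩
    rw [this, Finset.card_pair hne]
    rfl

lemma Dgr_comp (G : SimpleGraph V) (k n : ℤ) (f : SC G (k - 1) n) :
    Dgr G k n (k + 1) n (Dgr G (k - 1) n k n f) = 0 := by
  funext C''
  change (∑ b : {C : Config G // (Qg C : ℤ) = k ∧ (Eg C : ℤ) = n},
    if DStep b.1 C''.1 then (∑ a, if DStep a.1 b.1 then f a else 0) else 0) = 0
  have : ∀ b : {C : Config G // (Qg C : ℤ) = k ∧ (Eg C : ℤ) = n},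
      (if DStep b.1 C''.1 then (∑ a : {C : Config G // (Qg C : ℤ) = k - 1 ∧ (Eg C : ℤ) = n},
        if DStep a.1 b.1 then f a else 0) else 0) =
      ∑ a : {C : Config G // (Qg C : ℤ) = k - 1 ∧ (Eg C : ℤ) = n},
        if DStep a.1 b.1 ∧ DStep b.1 C''.1 then f a else 0 := by
    intro b
    by_cases h : DStep b.1 C''.1 <;> simp [h]
  rw [Finset.sum_congr rfl (fun b _ => this b), Finset.sum_comm]
  refine Finset.sum_eq_zero fun a _ => ?_
  rw [← Finset.sum_filter, Finset.sum_const, nsmul_eq_mul]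
  have hc : (Finset.univ.filter fun b : {C : Config G // (Qg C : ℤ) = k ∧ (Eg C : ℤ) = n} =>
      DStep a.1 b.1 ∧ DStep b.1 C''.1).card =
      (Finset.univ.filter fun C' : Config G => DStep a.1 C' ∧ DStep C' C''.1).card := by
    refine Finset.card_bij (fun b _ => b.1) ?_ ?_ ?_
    · intro b hb; simpa using hb
    · intro b _ b' _ h; exact Subtype.ext h
    · intro b hb
      simp only [Finset.mem_filter, Finset.mem_univ, true_and] at hb
      refine ⟨⟨b, ?_, ?_⟩, by simpa using hb, rfl⟩
      · have := DStep_Qg hb.1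
        have := a.2.1
        push_cast [*]; omega
      · rw [DStep_Eg hb.1, a.2.2]
  rw [hc, DD_card, zero_mul]

/-- rank of the differential into degree `k` -/
noncomputable def rk (G : SimpleGraph V) (k n : ℤ) : ℕ :=
  Module.finrank (ZMod 2) (LinearMap.range (Dgr G (k - 1) n k n))

/-- number of configurations in a bidegree -/
noncomputable def cnt (G : SimpleGraph V) (k n : ℤ) : ℕ :=
  Fintype.card {C : Config G // (Qg C : ℤ) = k ∧ (Eg C : ℤ) = n}

lemma rk_eq (G : SimpleGraph V) (k j n : ℤ) (h : j = k + 1) :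
    Module.finrank (ZMod 2) (LinearMap.range (Dgr G k n (k + 1) n)) = rk G j n := by
  obtain rfl : k = j - 1 := by omega
  unfold rk
  have : j - 1 + 1 = j := by omega
  rw [this]

lemma SHdim_add (G : SimpleGraph V) (k n : ℤ) :
    SHdim G k n + rk G k n + rk G (k + 1) n = cnt G k n := by
  have hle : LinearMap.range (Dgr G (k - 1) n k n) ≤ LinearMap.ker (Dgr G k n (k + 1) n) := by
    rintro _ ⟨f, rfl⟩
    exact Dgr_comp G k n f
  have h1 := Submodule.finrank_quotient_add_finrank
    ((LinearMap.range (Dgr G (k - 1) n k n)).comap (LinearMap.ker (Dgr G k n (k + 1) n)).subtype)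
  have h2 := (Submodule.comapSubtypeEquivOfLe hle).finrank_eq
  have h3 := LinearMap.finrank_range_add_finrank_ker (Dgr G k n (k + 1) n)
  rw [rk_eq G k (k + 1) n rfl] at h3
  have h4 : Module.finrank (ZMod 2) (SC G k n) = cnt G k n := by
    unfold SC cnt
    exact Module.finrank_fintype_fun_eq_card _
  rw [h4] at h3
  rw [h2] at h1
  unfold SHdim cohDim
  change _ + rk G k n = _ at h1
  omega

lemma Eg_bound (G : SimpleGraph V) : ∃ N : ℕ, ∀ C : Config G, Eg C < N := by
  refine ⟨(∑ C : Config G, Eg C) + 1, fun C => ?_⟩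
  have := Finset.single_le_sum (f := fun C : Config G => Eg C) (fun _ _ => Nat.zero_le _)
    (Finset.mem_univ C)
  omega

lemma cnt_zero (G : SimpleGraph V) {N : ℕ} (hN : ∀ C : Config G, Eg C < N) (k n : ℕ)
    (h : N ≤ k ∨ N ≤ n) : cnt G k n = 0 := by
  unfold cnt
  rw [Fintype.card_eq_zero_iff]
  refine ⟨fun C => ?_⟩
  have h1 := hN C.1
  have h2 : Qg C.1 ≤ Eg C.1 := by unfold Eg; omega
  have h3 := C.2.1
  have h4 := C.2.2
  omega

lemma rk_le_cnt (G : SimpleGraph V) (k n : ℤ) : rk G k n ≤ cnt G k n := by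
  have := SHdim_add G k n
  omega

lemma rk_zero (G : SimpleGraph V) (n : ℤ) : rk G 0 n = 0 := by
  have h := SHdim_add G (0 - 1) n
  have h2 : cnt G (0 - 1) n = 0 := by
    unfold cnt
    rw [Fintype.card_eq_zero_iff]
    refine ⟨fun C => ?_⟩
    have h3 := C.2.1
    omega
  rw [h2] at h
  have h3 : (0 : ℤ) - 1 + 1 = 0 := by norm_num
  rw [h3] at h
  omega

lemma telescope (r : ℕ → ℕ) (N : ℕ) (h0 : r 0 = 0) :
    ∑ k ∈ Finset.range N, (-1 : Polynomial ℤ) ^ k * ((r k : Polynomial ℤ) + r (k + 1)) =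
      - (-1) ^ N * (r N : Polynomial ℤ) := by
  induction N with
  | zero => simp [h0]
  | succ N ih => rw [Finset.sum_range_succ, ih]; ring

lemma euler_configs (G : SimpleGraph V) :
    (∑ᶠ (k : ℕ) (n : ℕ),
        (-1 : Polynomial ℤ) ^ k * X ^ n * (SHdim G (k : ℤ) (n : ℤ) : Polynomial ℤ)) =
      ∑ C : Config G, (-1 : Polynomial ℤ) ^ Qg C * X ^ Eg C := by
  obtain ⟨N, hN⟩ := Eg_bound G
  have hz : ∀ k n : ℕ, N ≤ k ∨ N ≤ n → SHdim G k n = 0 := by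
    intro k n h
    have h1 := cnt_zero G hN k n h
    have h2 := SHdim_add G k n
    omega
  have hin : ∀ k : ℕ, (∑ᶠ n : ℕ,
      (-1 : Polynomial ℤ) ^ k * X ^ n * (SHdim G (k : ℤ) (n : ℤ) : Polynomial ℤ)) =
      ∑ n ∈ Finset.range N,
      (-1 : Polynomial ℤ) ^ k * X ^ n * (SHdim G (k : ℤ) (n : ℤ) : Polynomial ℤ) := by
    intro k
    refine finsum_eq_sum_of_support_subset _ fun n hn => ?_
    by_contra hc
    simp only [Finset.coe_range, Set.mem_Iio, not_lt] at hc
    apply hn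
    simp [hz k n (Or.inr hc)]
  simp_rw [hin]
  rw [finsum_eq_sum_of_support_subset (s := Finset.range N)]
  swap
  · intro k hk
    by_contra hc
    simp only [Finset.coe_range, Set.mem_Iio, not_lt] at hc
    apply hk
    exact Finset.sum_eq_zero fun n _ => by simp [hz k n (Or.inl hc)]
  have h1 : ∑ k ∈ Finset.range N, ∑ n ∈ Finset.range N,
      (-1 : Polynomial ℤ) ^ k * X ^ n * (SHdim G (k : ℤ) (n : ℤ) : Polynomial ℤ) =
      ∑ k ∈ Finset.range N, ∑ n ∈ Finset.range N,
      (-1 : Polynomial ℤ) ^ k * X ^ n * (cnt G (k : ℤ) (n : ℤ) : Polynomial ℤ) := by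
    rw [Finset.sum_comm]
    conv_rhs => rw [Finset.sum_comm]
    refine Finset.sum_congr rfl fun n _ => ?_
    have ht := telescope (fun k => rk G k n) N (rk_zero G n)
    have hrN : rk G N n = 0 := by
      have h1 := cnt_zero G hN N n (Or.inl le_rfl)
      have h2 := rk_le_cnt G N n
      omega
    simp only [hrN, Nat.cast_zero, mul_zero] at ht
    have h5 : ∑ k ∈ Finset.range N,
      (-1 : Polynomial ℤ) ^ k * X ^ n * (cnt G (k : ℤ) (n : ℤ) : Polynomial ℤ) =
      ∑ k ∈ Finset.range N,
      (-1 : Polynomial ℤ) ^ k * X ^ n * (SHdim G (k : ℤ) (n : ℤ) : Polynomial ℤ) +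
      X ^ n * ∑ k ∈ Finset.range N, (-1 : Polynomial ℤ) ^ k *
        ((rk G k n : Polynomial ℤ) + (rk G ((k + 1 : ℕ) : ℤ) n : Polynomial ℤ)) := by
      rw [Finset.mul_sum, ← Finset.sum_add_distrib]
      refine Finset.sum_congr rfl fun k _ => ?_
      rw [← SHdim_add G k n]
      push_cast
      ring
    rw [h5, ht, mul_zero, add_zero]
  rw [h1]
  have h2 : ∀ k n : ℕ, (-1 : Polynomial ℤ) ^ k * X ^ n * (cnt G (k : ℤ) (n : ℤ) : Polynomial ℤ) =
      ∑ C : Config G, if Qg C = k then (if Eg C = n then (-1 : Polynomial ℤ) ^ Qg C * X ^ Eg C else 0)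
        else 0 := by
    intro k n
    have : cnt G (k : ℤ) (n : ℤ) =
        (Finset.univ.filter fun C : Config G => Qg C = k ∧ Eg C = n).card := by
      unfold cnt
      rw [Fintype.card_subtype]
      congr 1
      ext C
      simp
    rw [this, mul_comm, ← nsmul_eq_mul, ← Finset.sum_const, Finset.sum_filter]
    refine Finset.sum_congr rfl fun C _ => ?_
    by_cases h1 : Qg C = k <;> by_cases h2 : Eg C = n <;> simp [h1, h2]
  simp_rw [h2]
  have h3 : ∀ k : ℕ, ∑ n ∈ Finset.range N, ∑ C : Config G,
      (if Qg C = k then (if Eg C = n then (-1 : Polynomial ℤ) ^ Qg C * X ^ Eg C else 0) else 0) =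
      ∑ C : Config G, if Qg C = k then (-1 : Polynomial ℤ) ^ Qg C * X ^ Eg C else 0 := by
    intro k
    rw [Finset.sum_comm]
    refine Finset.sum_congr rfl fun C _ => ?_
    by_cases h1 : Qg C = k
    · simp only [h1, if_true]
      rw [Finset.sum_ite_eq, if_pos (Finset.mem_range.2 (hN C))]
    · simp [h1]
  simp_rw [h3]
  rw [Finset.sum_comm]
  refine Finset.sum_congr rfl fun C _ => ?_
  rw [Finset.sum_ite_eq, if_pos]
  have h2 : Qg C ≤ Eg C := by unfold Eg; omega
  exact Finset.mem_range.2 (lt_of_le_of_lt h2 (hN C))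

lemma acyclic_perm_invol {G : SimpleGraph V} (hG : G.IsAcyclic) (σ : Equiv.Perm V)
    (h : ∀ v, σ v = v ∨ G.Adj v (σ v)) (v : V) : σ (σ v) = v := by
  by_contra hne
  have hv : σ v ≠ v := by
    intro h; rw [h, h] at hne; exact hne rfl
  have hadj : G.Adj v (σ v) := (h v).resolve_left hv
  have hb := SimpleGraph.isAcyclic_iff_forall_adj_isBridge.1 hG hadj
  rw [SimpleGraph.isBridge_iff] at hb
  set H := G.deleteEdges {s(v, σ v)} with hH
  have key : ∀ n : ℕ, H.Reachable (σ v) v ∨ H.Reachable (σ v) ((σ ^ n) (σ v)) := by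
    intro n
    induction n with
    | zero => right; exact SimpleGraph.Reachable.refl _
    | succ n ih =>
      rcases ih with ih | ih
      · exact Or.inl ih
      · by_cases hw : (σ ^ n) (σ v) = v
        · rw [hw] at ih; exact Or.inl ih
        · right
          rw [pow_succ', Equiv.Perm.mul_apply]
          generalize (σ ^ n) (σ v) = w at ih hw
          rcases h w with h1 | h1
          · rw [h1]; exact ih
          · refine ih.trans (SimpleGraph.Adj.reachable ?_)
            rw [hH, SimpleGraph.deleteEdges_adj]
            refine ⟨h1, ?_⟩
            simp only [Set.mem_singleton_iff, Sym2.eq_iff, not_or, not_and]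
            refine ⟨fun h2 => (hw h2).elim, fun h2 h3 => ?_⟩
            rw [h2] at h3
            exact hne h3
  have hlast : (σ ^ (orderOf σ - 1)) (σ v) = v := by
    rw [← Equiv.Perm.mul_apply, ← pow_succ, Nat.sub_add_cancel (orderOf_pos σ), pow_orderOf_eq_one]
    rfl
  rcases key (orderOf σ - 1) with h1 | h1
  · exact hb h1.symm
  · rw [hlast] at h1; exact hb h1.symm

/-- permutations moving vertices along edges, of order two -/
def GoodPerm (G : SimpleGraph V) (σ : Equiv.Perm V) : Prop :=
  (∀ v, σ v = v ∨ G.Adj v (σ v)) ∧ ∀ v, σ (σ v) = v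

/-- The matching attached to an involution. -/
noncomputable def redOf (σ : Equiv.Perm V) : Finset (Sym2 V) :=
  (Finset.univ.filter fun v => σ v ≠ v).image fun v => s(v, σ v)

lemma mem_redOf {σ : Equiv.Perm V} (hσ : ∀ v, σ (σ v) = v) {u v : V} :
    s(u, v) ∈ redOf σ ↔ u ≠ v ∧ σ u = v := by
  unfold redOf
  simp only [Finset.mem_image, Finset.mem_filter, Finset.mem_univ, true_and, Sym2.eq_iff]
  constructor
  · rintro ⟨w, hw, ⟨rfl, rfl⟩ | ⟨rfl, rfl⟩⟩
    · exact ⟨hw.symm, rfl⟩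
    · exact ⟨hw, hσ w⟩
  · rintro ⟨h1, rfl⟩
    exact ⟨u, h1.symm, Or.inl ⟨rfl, rfl⟩⟩

lemma redOf_covers {σ : Equiv.Perm V} (hσ : ∀ v, σ (σ v) = v) (v : V) :
    (∃ e ∈ redOf σ, v ∈ e) ↔ σ v ≠ v := by
  constructor
  · rintro ⟨e, he, hv⟩
    obtain ⟨w, rfl⟩ := Sym2.mem_iff_exists.1 hv
    rw [mem_redOf hσ] at he
    rw [he.2]; exact he.1.symm
  · intro h
    exact ⟨s(v, σ v), (mem_redOf hσ).2 ⟨h.symm, rfl⟩, by simp⟩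

lemma redOf_matching {G : SimpleGraph V} {σ : Equiv.Perm V} (h : GoodPerm G σ) :
    IsMatching G (redOf σ) := by
  constructor
  · intro e
    induction e with
    | _ u v =>
      intro he
      rw [mem_redOf h.2] at he
      rcases h.1 u with h1 | h1
      · exact (he.1 (h1.symm.trans he.2)).elim
      · rw [he.2] at h1; exact h1
  · intro e he f hf hne v hv hv'
    obtain ⟨w, rfl⟩ := Sym2.mem_iff_exists.1 hv
    obtain ⟨w', rfl⟩ := Sym2.mem_iff_exists.1 hv'
    rw [mem_redOf h.2] at he hf
    apply hne
    rw [← he.2, ← hf.2]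

lemma redOf_injective {σ τ : Equiv.Perm V} (hσ : ∀ v, σ (σ v) = v) (hτ : ∀ v, τ (τ v) = v)
    (h : redOf σ = redOf τ) : σ = τ := by
  ext v
  by_cases hv : σ v = v
  · have h1 : ¬ (τ v ≠ v) := by
      rw [← redOf_covers hτ, ← h, redOf_covers hσ]; simpa using hv
    rw [hv]; push Not at h1; exact h1.symm
  · have h1 : s(v, σ v) ∈ redOf σ := (mem_redOf hσ).2 ⟨fun h => hv h.symm, rfl⟩
    rw [h, mem_redOf hτ] at h1
    exact h1.2.symm

lemma redOf_surjective {G : SimpleGraph V} {R : Finset (Sym2 V)} (hR : IsMatching G R) :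
    ∃ σ : Equiv.Perm V, GoodPerm G σ ∧ redOf σ = R := by
  have huniq : ∀ v w w', s(v, w) ∈ R → s(v, w') ∈ R → w = w' := by
    intro v w w' h1 h2
    by_contra hne
    refine hR.2 _ h1 _ h2 ?_ v (by simp) (by simp)
    intro h
    exact hne (Sym2.congr_right.1 h)
  have hex : ∀ v, ∃ w, s(v, w) ∈ R ∨ (w = v ∧ ∀ x, s(v, x) ∉ R) := by
    intro v
    by_cases h : ∃ w, s(v, w) ∈ R
    · exact h.imp fun _ => Or.inl
    · push Not at h
      exact ⟨v, Or.inr ⟨rfl, h⟩⟩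
  choose f hf using hex
  have hinv : ∀ v, f (f v) = v := by
    intro v
    rcases hf v with h | ⟨h, h'⟩
    · rcases hf (f v) with h1 | h1
      · rw [Sym2.eq_swap] at h
        exact huniq _ _ _ h1 h
      · rw [Sym2.eq_swap] at h
        exact (h1.2 _ h).elim
    · rw [h, h]
  let σ : Equiv.Perm V := ⟨f, f, hinv, hinv⟩
  have hσ : ∀ v, σ (σ v) = v := hinv
  refine ⟨σ, ⟨fun v => ?_, hσ⟩, ?_⟩
  · rcases hf v with h | h
    · right; exact hR.1 _ h
    · left; exact h.1
  · ext e
    induction e with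
    | _ u v =>
      rw [mem_redOf hσ]
      constructor
      · rintro ⟨h1, rfl⟩
        rcases hf u with h | h
        · exact h
        · exact (h1 h.1.symm).elim
      · intro h
        have hadj : G.Adj u v := hR.1 _ h
        refine ⟨hadj.ne, ?_⟩
        rcases hf u with h1 | h1
        · exact huniq _ _ _ h1 h
        · exact (h1.2 _ h).elim

/-- fixed points -/
noncomputable def fixF (σ : Equiv.Perm V) : Finset V := Finset.univ.filter fun v => σ v = v

lemma sum_fiber {G : SimpleGraph V} {σ : Equiv.Perm V} (h : GoodPerm G σ) :
    ∑ C ∈ Finset.univ.filter (fun C : Config G => C.red = redOf σ),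
      (-1 : Polynomial ℤ) ^ Qg C * X ^ Eg C =
    X ^ (redOf σ).card * (1 - X) ^ (fixF σ).card := by
  have h0 : (1 - X : Polynomial ℤ) = (-X) + 1 := by ring
  rw [h0, ← Finset.sum_pow_mul_eq_add_pow, Finset.mul_sum]
  refine Finset.sum_bij (fun C _ => Finset.univ.filter fun v => C.sign v = some false) ?_ ?_ ?_ ?_
  · intro C hC
    simp only [Finset.mem_filter, Finset.mem_univ, true_and] at hC
    rw [Finset.mem_powerset]
    intro v hv
    simp only [Finset.mem_filter, Finset.mem_univ, true_and, fixF] at hv ⊢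
    by_contra hc
    have := (redOf_covers h.2 v).2 hc
    rw [← hC, ← C.sign_none, hv] at this
    simp at this
  · intro C hC D hD hCD
    simp only [Finset.mem_filter, Finset.mem_univ, true_and] at hC hD
    refine config_ext (hC.trans hD.symm) ?_
    funext v
    have h1 : C.sign v = none ↔ D.sign v = none := by
      rw [C.sign_none, D.sign_none, hC, hD]
    have h2 := Finset.ext_iff.1 hCD v
    simp only [Finset.mem_filter, Finset.mem_univ, true_and] at h2
    rcases hc : C.sign v with _ | _ | _ <;> rcases hd : D.sign v with _ | _ | _ <;>
      simp_all
  · intro M hM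
    rw [Finset.mem_powerset] at hM
    refine ⟨⟨redOf σ, redOf_matching h,
      fun v => if σ v ≠ v then none else some (decide (v ∉ M)), ?_⟩, ?_, ?_⟩
    · intro v
      rw [redOf_covers h.2]
      by_cases hv : σ v = v <;> simp [hv]
    · simp
    · ext v
      simp only [Finset.mem_filter, Finset.mem_univ, true_and]
      by_cases hv : σ v = v
      · simp [hv]
      · have : v ∉ M := fun hm => hv (by simpa [fixF] using hM hm)
        simp [hv, this]
  · intro C hC
    simp only [Finset.mem_filter, Finset.mem_univ, true_and] at hC
    change _ = X ^ (redOf σ).card * ((-X) ^ Qg C * 1 ^ _)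
    unfold Eg
    rw [hC, one_pow, neg_pow (X : Polynomial ℤ)]
    ring

lemma sum_configs (G : SimpleGraph V) :
    ∑ C : Config G, (-1 : Polynomial ℤ) ^ Qg C * X ^ Eg C =
    ∑ σ ∈ Finset.univ.filter (fun σ : Equiv.Perm V => GoodPerm G σ),
      X ^ (redOf σ).card * (1 - X : Polynomial ℤ) ^ (fixF σ).card := by
  have h1 : ∀ σ ∈ Finset.univ.filter (fun σ : Equiv.Perm V => GoodPerm G σ),
      X ^ (redOf σ).card * (1 - X : Polynomial ℤ) ^ (fixF σ).card =
      ∑ C : Config G, if C.red = redOf σ then (-1 : Polynomial ℤ) ^ Qg C * X ^ Eg C else 0 := by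
    intro σ hσ
    simp only [Finset.mem_filter, Finset.mem_univ, true_and] at hσ
    rw [← sum_fiber hσ, Finset.sum_filter]
  rw [Finset.sum_congr rfl h1, Finset.sum_comm]
  refine Finset.sum_congr rfl fun C _ => ?_
  obtain ⟨σ, hσ, hC⟩ := redOf_surjective C.matching
  rw [Finset.sum_eq_single σ]
  · simp [hC]
  · intro τ hτ hne
    simp only [Finset.mem_filter, Finset.mem_univ, true_and] at hτ
    rw [if_neg]
    intro hc
    exact hne (redOf_injective hτ.2 hσ.2 (hc.symm.trans hC.symm))
  · intro hn
    exact (hn (by simpa using hσ)).elim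

section Det
variable {m : ℕ}

/-- matrix over the vertices -/
noncomputable def vmat (G : SimpleGraph V) (e : V ≃ Fin m) : Matrix V V (Polynomial ℤ) :=
  fun u v => if u = v then 1 - X else if G.Adj u v then (if e u < e v then X else -1) else 0

lemma alexDet_eq (G : SimpleGraph V) (e : V ≃ Fin m) : alexDet G e = (vmat G e).det := by
  unfold alexDet
  rw [← Matrix.det_submatrix_equiv_self e]
  congr 1
  ext1 u v
  simp only [Matrix.submatrix_apply, Matrix.sub_apply, Matrix.smul_apply, Matrix.map_apply,
    Matrix.transpose_apply, seifertMatrix, vmat, Equiv.symm_apply_apply, smul_eq_mul]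
  by_cases huv : u = v
  · subst huv
    simp
    ring
  · have h1 : e u ≠ e v := fun h => huv (e.injective h)
    by_cases ha : G.Adj u v
    · rcases lt_or_gt_of_ne h1 with h2 | h2
      · simp [huv, h1, h1.symm, ha, h2, h2.not_gt]
      · simp [huv, h1, h1.symm, ha, ha.symm, h2, h2.not_gt]
    · have ha' : ¬ G.Adj v u := fun h => ha h.symm
      simp [huv, h1, h1.symm, ha, ha']

lemma term_good {G : SimpleGraph V} (e : V ≃ Fin m) {σ : Equiv.Perm V} (h : GoodPerm G σ) :
    ((Equiv.Perm.sign σ : ℤ) : Polynomial ℤ) * ∏ v, vmat G e (σ v) v =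
      X ^ (redOf σ).card * (1 - X : Polynomial ℤ) ^ (fixF σ).card := by
  set A := Finset.univ.filter fun v => e v < e (σ v) with hA
  set B := Finset.univ.filter fun v => e (σ v) < e v with hB
  have hAB : A.card = B.card := by
    refine Finset.card_bij (fun v _ => σ v) ?_ (fun v _ w _ hvw => σ.injective hvw) ?_
    · intro v hv
      simpa [hA, hB, h.2 v] using hv
    · intro v hv
      exact ⟨σ v, by simpa [hA, hB, h.2 v] using hv, h.2 v⟩
  have hAR : A.card = (redOf σ).card := by
    refine Finset.card_bij (fun v _ => s(v, σ v)) ?_ ?_ ?_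
    · intro v hv
      simp only [hA, Finset.mem_filter, Finset.mem_univ, true_and] at hv
      exact (mem_redOf h.2).2 ⟨fun hc => by rw [← hc] at hv; exact lt_irrefl _ hv, rfl⟩
    · intro v hv w hw hvw
      simp only [hA, Finset.mem_filter, Finset.mem_univ, true_and] at hv hw
      rw [Sym2.eq_iff] at hvw
      rcases hvw with h1 | ⟨h1, h2⟩
      · exact h1.1
      · rw [h2, h1] at hv
        exact (lt_asymm hv hw).elim
    · intro f
      induction f with
      | _ u v =>
        intro hf
        rw [mem_redOf h.2] at hf
        obtain ⟨h1, rfl⟩ := hf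
        rcases lt_or_gt_of_ne (fun hc => h1 (e.injective hc) : e u ≠ e (σ u)) with h2 | h2
        · exact ⟨u, by simpa [hA] using h2, rfl⟩
        · refine ⟨σ u, by simpa [hA, h.2 u] using h2, ?_⟩
          rw [h.2 u, Sym2.eq_swap]
  have hprod : ∏ v, vmat G e (σ v) v =
      (1 - X : Polynomial ℤ) ^ (fixF σ).card * (-1) ^ A.card * X ^ B.card := by
    have h1 : ∀ v, vmat G e (σ v) v = (if σ v = v then (1 - X : Polynomial ℤ) else 1) *
        (if e v < e (σ v) then -1 else 1) * (if e (σ v) < e v then X else 1) := by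
      intro v
      unfold vmat
      by_cases hv : σ v = v
      · simp [hv]
      · have ha : G.Adj (σ v) v := ((h.1 v).resolve_left hv).symm
        rcases lt_or_gt_of_ne (fun hc => hv (e.injective hc) : e (σ v) ≠ e v) with h2 | h2
        · simp [hv, ha, h2, h2.not_gt]
        · simp [hv, ha, h2, h2.not_gt]
    rw [Finset.prod_congr rfl fun v _ => h1 v, Finset.prod_mul_distrib, Finset.prod_mul_distrib,
      ← Finset.prod_filter, ← Finset.prod_filter, ← Finset.prod_filter, Finset.prod_const,
      Finset.prod_const, Finset.prod_const]
    rfl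
  have hcard : Fintype.card V = (fixF σ).card + A.card + B.card := by
    have h1 : (Finset.univ : Finset V) = fixF σ ∪ A ∪ B := by
      ext v
      simp only [Finset.mem_univ, Finset.mem_union, fixF, hA, hB, Finset.mem_filter, true_and,
        true_iff]
      rcases lt_trichotomy (e v) (e (σ v)) with h | h | h
      · tauto
      · exact Or.inl (Or.inl (e.injective h).symm)
      · tauto
    rw [← Finset.card_univ, h1, Finset.card_union_of_disjoint, Finset.card_union_of_disjoint]
    · rw [Finset.disjoint_left]
      intro v hv hv'
      simp only [fixF, hA, Finset.mem_filter, Finset.mem_univ, true_and] at hv hv'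
      rw [hv] at hv'
      exact lt_irrefl _ hv'
    · rw [Finset.disjoint_left]
      intro v hv hv'
      simp only [Finset.mem_union, fixF, hA, hB, Finset.mem_filter, Finset.mem_univ, true_and]
        at hv hv'
      rcases hv with hv | hv
      · rw [hv] at hv'
        exact lt_irrefl _ hv'
      · exact lt_asymm hv hv'
  have hsign : Equiv.Perm.sign σ = (-1) ^ A.card := by
    have h2 : σ ^ 2 = 1 := by
      ext v
      simp [pow_two, h.2 v]
    rw [Equiv.Perm.sign_of_pow_two_eq_one h2]
    have h3 : Fintype.card (Function.fixedPoints σ) = (fixF σ).card := by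
      rw [fixF, ← Fintype.card_subtype]
      exact Fintype.card_congr (Equiv.refl _)
    rw [h3, hcard]
    congr 1
    omega
  rw [hsign, hprod, ← hAR, ← hAB]
  push_cast
  have : ((-1 : Polynomial ℤ) ^ A.card) * (-1) ^ A.card = 1 := by
    rw [← mul_pow]; simp
  linear_combination (X ^ A.card * (1 - X : Polynomial ℤ) ^ (fixF σ).card) * this

lemma det_sum (G : SimpleGraph V) (hG : G.IsAcyclic) (e : V ≃ Fin m) :
    alexDet G e = ∑ σ ∈ Finset.univ.filter (fun σ : Equiv.Perm V => GoodPerm G σ),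
      X ^ (redOf σ).card * (1 - X : Polynomial ℤ) ^ (fixF σ).card := by
  rw [alexDet_eq, Matrix.det_apply', Finset.sum_filter]
  refine Finset.sum_congr rfl fun σ _ => ?_
  by_cases h : GoodPerm G σ
  · rw [if_pos h, term_good e h]
  · rw [if_neg h]
    have : ∃ v, ¬ (σ v = v ∨ G.Adj v (σ v)) := by
      by_contra hc
      push Not at hc
      have hc' : ∀ v, σ v = v ∨ G.Adj v (σ v) := fun v => by
        by_cases h1 : σ v = v
        · exact Or.inl h1
        · have := hc v; tauto
      exact h ⟨hc', acyclic_perm_invol hG σ hc'⟩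
    obtain ⟨v, hv⟩ := this
    rw [not_or] at hv
    rw [Finset.prod_eq_zero (Finset.mem_univ v), mul_zero]
    unfold vmat
    rw [if_neg hv.1, if_neg (fun h => hv.2 h.symm)]

end Det

/-- the graded Euler characteristic of the Seifert cohomology equals
`det (t S - Sᵀ)`: `Σ_{k,n} (-1)^k t^n dim SH^k(T,n) = det (t S - Sᵀ)` in `ℤ[t]`. -/
theorem euler_char_eq_alexDet (G : SimpleGraph V) (hG : G.IsTree)
    {m : ℕ} (e : V ≃ Fin m) :
    (∑ᶠ (k : ℕ) (n : ℕ),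
        (-1 : Polynomial ℤ) ^ k * X ^ n * (SHdim G (k : ℤ) (n : ℤ) : Polynomial ℤ)) =
      alexDet G e := by
  rw [euler_configs, sum_configs, det_sum G hG.isAcyclic e]

end Seifert
end

section
/- Let A_n denote the path tree on n vertices (the Dynkin diagram of type A_n). Then for all integers k, m, dim SH^k(A_n, m) = 1 if k = m and 0 ≤ k ≤ n, and dim SH^k(A_n, m) = 0 otherwise; equivalently, the Poincaré polynomial of the Seifert cohomology of A_n is 1 + qt + q²t² + … + qⁿtⁿ. -/
open Polynomial Matrix

attribute [local instance] Classical.propDecidable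

namespace Seifert

variable {V : Type} [Fintype V]

/-! ### Words: the free algebra model -/

/-- Letters: a plus vertex, a minus vertex, a red edge. -/
inductive Ltr : Type
  | P | M | R

open Ltr

/-- The `F₂`-vector space spanned by words. -/
abbrev X : Type := List Ltr →₀ ZMod 2

/-- Left multiplication by a letter. -/
noncomputable def lc (a : Ltr) : X →ₗ[ZMod 2] X := Finsupp.lmapDomain (ZMod 2) (ZMod 2) (List.cons a)

/-- Right multiplication by `M`. -/
noncomputable def rM : X →ₗ[ZMod 2] X := Finsupp.lmapDomain (ZMod 2) (ZMod 2) (fun w => w ++ [M])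

/-- Basis vectors. -/
noncomputable def bv (w : List Ltr) : X := Finsupp.single w 1

noncomputable def ext (f : List Ltr → X) : X →ₗ[ZMod 2] X := Finsupp.linearCombination (ZMod 2) f

theorem lc_bv (a : Ltr) (w : List Ltr) : lc a (bv w) = bv (a :: w) := by
  simp [lc, bv]

theorem rM_bv (w : List Ltr) : rM (bv w) = bv (w ++ [M]) := by
  simp [rM, bv]

theorem ext_bv (f : List Ltr → X) (w : List Ltr) : ext f (bv w) = f w := by
  simp [ext, bv]

theorem lin_ext {A : Type*} [AddCommMonoid A] [Module (ZMod 2) A] {f g : X →ₗ[ZMod 2] A}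
    (h : ∀ w, f (bv w) = g (bv w)) (x : X) : f x = g x := by
  have : f = g := by
    apply Finsupp.lhom_ext
    intro a b
    have := h a
    have e : (Finsupp.single a b : X) = b • bv a := by simp [bv]
    rw [e, map_smul, map_smul, this]
  rw [this]

noncomputable def Dw : List Ltr → X
  | [] => 0
  | P :: w => lc P (Dw w)
  | M :: w => lc M (Dw w)
  | R :: w => bv (P :: M :: w) + bv (M :: P :: w) + lc R (Dw w)

noncomputable def DX : X →ₗ[ZMod 2] X := ext Dw

noncomputable def piw : List Ltr → X
  | [] => bv []
  | P :: w => lc P (piw w)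
  | M :: w => rM (piw w)
  | R :: _ => 0

noncomputable def piX : X →ₗ[ZMod 2] X := ext piw

noncomputable def sw : List Ltr → X
  | [] => 0
  | P :: w => bv (R :: w) + lc P (sw w)
  | M :: _ => 0
  | R :: _ => 0

noncomputable def sX : X →ₗ[ZMod 2] X := ext sw

noncomputable def hw : List Ltr → X
  | [] => 0
  | P :: w => lc P (hw w)
  | M :: w => lc M (hw w) + sX (piw w)
  | R :: w => lc R (hw w)

noncomputable def hX : X →ₗ[ZMod 2] X := ext hw

theorem DX_bv (w) : DX (bv w) = Dw w := ext_bv _ _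
theorem piX_bv (w) : piX (bv w) = piw w := ext_bv _ _
theorem sX_bv (w) : sX (bv w) = sw w := ext_bv _ _
theorem hX_bv (w) : hX (bv w) = hw w := ext_bv _ _

theorem DX_P (x : X) : DX (lc P x) = lc P (DX x) :=
  lin_ext (f := DX ∘ₗ lc P) (g := lc P ∘ₗ DX) (fun w => by simp [lc_bv, DX_bv, Dw]) x
theorem DX_M (x : X) : DX (lc M x) = lc M (DX x) :=
  lin_ext (f := DX ∘ₗ lc M) (g := lc M ∘ₗ DX) (fun w => by simp [lc_bv, DX_bv, Dw]) x
theorem DX_R (x : X) : DX (lc R x) = lc P (lc M x) + lc M (lc P x) + lc R (DX x) :=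
  lin_ext (f := DX ∘ₗ lc R) (g := lc P ∘ₗ lc M + lc M ∘ₗ lc P + lc R ∘ₗ DX)
    (fun w => by simp [lc_bv, DX_bv, Dw]) x
theorem piX_P (x : X) : piX (lc P x) = lc P (piX x) :=
  lin_ext (f := piX ∘ₗ lc P) (g := lc P ∘ₗ piX) (fun w => by simp [lc_bv, piX_bv, piw]) x
theorem piX_M (x : X) : piX (lc M x) = rM (piX x) :=
  lin_ext (f := piX ∘ₗ lc M) (g := rM ∘ₗ piX) (fun w => by simp [lc_bv, piX_bv, piw]) x
theorem piX_R (x : X) : piX (lc R x) = 0 :=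
  lin_ext (f := piX ∘ₗ lc R) (g := 0) (fun w => by simp [lc_bv, piX_bv, piw]) x
theorem sX_P (x : X) : sX (lc P x) = lc R x + lc P (sX x) :=
  lin_ext (f := sX ∘ₗ lc P) (g := lc R + lc P ∘ₗ sX) (fun w => by simp [lc_bv, sX_bv, sw]) x
theorem hX_P (x : X) : hX (lc P x) = lc P (hX x) :=
  lin_ext (f := hX ∘ₗ lc P) (g := lc P ∘ₗ hX) (fun w => by simp [lc_bv, hX_bv, hw]) x
theorem hX_M (x : X) : hX (lc M x) = lc M (hX x) + sX (piX x) :=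
  lin_ext (f := hX ∘ₗ lc M) (g := lc M ∘ₗ hX + sX ∘ₗ piX)
    (fun w => by simp [lc_bv, hX_bv, piX_bv, hw]) x
theorem hX_R (x : X) : hX (lc R x) = lc R (hX x) :=
  lin_ext (f := hX ∘ₗ lc R) (g := lc R ∘ₗ hX) (fun w => by simp [lc_bv, hX_bv, hw]) x
theorem rM_P (x : X) : rM (lc P x) = lc P (rM x) :=
  lin_ext (f := rM ∘ₗ lc P) (g := lc P ∘ₗ rM) (fun w => by simp [lc_bv, rM_bv]) x
theorem DX_rM (x : X) : DX (rM x) = rM (DX x) := by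
  refine lin_ext (f := DX ∘ₗ rM) (g := rM ∘ₗ DX) (fun w => ?_) x
  have hl : ∀ a x, rM (lc a x) = lc a (rM x) := fun a x =>
    lin_ext (f := rM ∘ₗ lc a) (g := lc a ∘ₗ rM) (fun w => by simp [lc_bv, rM_bv]) x
  simp only [LinearMap.comp_apply, rM_bv, DX_bv]
  induction w with
  | nil => simp [Dw]
  | cons a w ih => cases a <;> simp [Dw, ih, hl, rM_bv]

/-- the sorted word -/
def srt (a b : ℕ) : List Ltr := List.replicate a P ++ List.replicate b M

theorem srt_snoc (a b : ℕ) : srt a b ++ [M] = srt a (b + 1) := by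
  simp [srt, List.replicate_succ']

theorem srt_cons (a b : ℕ) : P :: srt a b = srt (a + 1) b := by
  simp [srt, List.replicate_succ]

theorem Dw_srt (a b : ℕ) : Dw (srt a b) = 0 := by
  induction a with
  | zero =>
    induction b with
    | zero => simp [srt, Dw]
    | succ b ih => 
      simp only [srt, List.replicate_succ, List.replicate_zero, List.nil_append, Dw] at ih ⊢
      simp [ih]
  | succ a ih => rw [← srt_cons]; simp [Dw, ih]

/-- number of minus letters -/
def nM : List Ltr → ℕ
  | [] => 0
  | P :: w => nM w
  | M :: w => nM w + 1
  | R :: w => nM w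

/-- number of red letters -/
def nR : List Ltr → ℕ
  | [] => 0
  | P :: w => nR w
  | M :: w => nR w
  | R :: w => nR w + 1

/-- number of vertices -/
def len : List Ltr → ℕ
  | [] => 0
  | P :: w => len w + 1
  | M :: w => len w + 1
  | R :: w => len w + 2

theorem nM_le (w) : nM w ≤ len w := by
  induction w with
  | nil => simp [nM, len]
  | cons a w ih => cases a <;> simp [nM, len] <;> omega

theorem piw_zero (w : List Ltr) (h : nR w = 0) : piw w = bv (srt (len w - nM w) (nM w)) := by
  induction w with
  | nil => simp [piw, len, nM, srt]
  | cons a w ih =>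
    have := nM_le w
    cases a
    · rw [nR] at h
      rw [piw, ih h, lc_bv, srt_cons, len, nM]; congr 2; omega
    · rw [nR] at h
      rw [piw, ih h, rM_bv, srt_snoc, len, nM]; congr 2; omega
    · simp [nR] at h

theorem piw_ne (w : List Ltr) (h : nR w ≠ 0) : piw w = 0 := by
  induction w with
  | nil => simp [nR] at h
  | cons a w ih =>
    cases a
    · rw [nR] at h
      rw [piw, ih h, map_zero]
    · rw [nR] at h
      rw [piw, ih h, map_zero]
    · rfl

theorem piw_eq (w : List Ltr) : piw w = if nR w = 0 then bv (srt (len w - nM w) (nM w)) else 0 := by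
  split_ifs with h
  · exact piw_zero w h
  · exact piw_ne w h

theorem DX_piX (x : X) : DX (piX x) = 0 := by
  refine lin_ext (f := DX ∘ₗ piX) (g := 0) (fun w => ?_) x
  simp only [LinearMap.comp_apply, piX_bv, piw_eq]
  split_ifs <;> simp [DX_bv, Dw_srt]

theorem Ds_srt (a b : ℕ) : DX (sX (bv (srt a b))) = lc M (bv (srt a b)) + rM (bv (srt a b)) := by
  induction a with
  | zero =>
    have h1 : sw (srt 0 b) = 0 := by
      cases b <;> simp [srt, List.replicate_succ, sw]
    have h2 : M :: srt 0 b = srt 0 (b + 1) := by simp [srt, List.replicate_succ]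
    rw [sX_bv, h1, lc_bv, rM_bv, srt_snoc, h2, ZModModule.add_self, map_zero]
  | succ a ih =>
    rw [← srt_cons, ← lc_bv, sX_P, map_add, DX_P, ih, DX_R, DX_bv, Dw_srt, rM_P]
    simp only [map_add, map_zero]
    rw [show ∀ a b c : X, a + b + 0 + (a + c) = b + c + (a + a) by intros; abel,
      ZModModule.add_self, add_zero]

theorem DsX_pi (x : X) : DX (sX (piX x)) = lc M (piX x) + rM (piX x) := by
  refine lin_ext (f := DX ∘ₗ sX ∘ₗ piX) (g := lc M ∘ₗ piX + rM ∘ₗ piX) (fun w => ?_) x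
  simp only [LinearMap.comp_apply, LinearMap.add_apply, piX_bv, piw_eq]
  split_ifs
  · exact Ds_srt _ _
  · simp

theorem piX_D (x : X) : piX (DX x) = 0 := by
  refine lin_ext (f := piX ∘ₗ DX) (g := 0) (fun w => ?_) x
  simp only [LinearMap.comp_apply, DX_bv, LinearMap.zero_apply]
  induction w with
  | nil => simp [Dw]
  | cons a w ih =>
    cases a
    · simp [Dw, piX_P, ih]
    · simp [Dw, piX_M, ih]
    · simp only [Dw, map_add, piX_R, piX_bv, piw, rM_P]
      rw [ZModModule.add_self, add_zero]

theorem homotopy (x : X) : DX (hX x) + hX (DX x) = x + piX x := by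
  refine lin_ext (f := DX ∘ₗ hX + hX ∘ₗ DX) (g := LinearMap.id + piX) (fun w => ?_) x
  simp only [LinearMap.comp_apply, LinearMap.add_apply, LinearMap.id_apply]
  induction w with
  | nil => simp [DX_bv, hX_bv, piX_bv, Dw, hw, piw, ZModModule.add_self]
  | cons a w ih =>
    have ih' : DX (hX (bv w)) = bv w + piX (bv w) + hX (DX (bv w)) := by
      rw [← ih, add_assoc, ZModModule.add_self, add_zero]
    rw [← lc_bv]
    cases a
    · rw [hX_P, DX_P, DX_P, hX_P, piX_P, ← map_add, ih, map_add]
    · rw [hX_M, DX_M, map_add, DX_M, hX_M, piX_D, DsX_pi, piX_M, map_zero, ih', map_add, map_add]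
      generalize lc M (bv w) = a
      generalize lc M (piX (bv w)) = b
      generalize lc M (hX (DX (bv w))) = c
      generalize rM (piX (bv w)) = d
      rw [show a + b + c + (b + d) + (c + 0) = a + d + (b + b) + (c + c) by abel,
        ZModModule.add_self, ZModModule.add_self, add_zero, add_zero]
    · rw [hX_R, DX_R, DX_R, piX_R, map_add, map_add, hX_P, hX_M, hX_M, hX_R, hX_P, piX_P, sX_P, ih']
      simp only [map_add]
      generalize lc P (lc M (hX (bv w))) = a
      generalize lc M (lc P (hX (bv w))) = b
      generalize lc R (bv w) = c
      generalize lc R (piX (bv w)) = d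
      generalize lc R (hX (DX (bv w))) = e
      generalize lc P (sX (piX (bv w))) = f
      rw [show a + b + (c + d + e) + (a + f + (b + (d + f)) + e) =
        c + (a + a) + (b + b) + (d + d) + (e + e) + (f + f) by abel]
      simp only [ZModModule.add_self, add_zero]

/-- one-step relation on words -/
def Step (w w' : List Ltr) : Prop :=
  ∃ a b, w = a ++ R :: b ∧ (w' = a ++ P :: M :: b ∨ w' = a ++ M :: P :: b)

theorem Step_nil (w') : ¬ Step [] w' := by
  rintro ⟨a, b, h, -⟩; simp at h

theorem Step_cons (x w w') : Step (x :: w) w' ↔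
    (x = R ∧ (w' = P :: M :: w ∨ w' = M :: P :: w)) ∨ ∃ u, w' = x :: u ∧ Step w u := by
  constructor
  · rintro ⟨a, b, h, h'⟩
    cases a with
    | nil =>
      simp at h; obtain ⟨rfl, rfl⟩ := h; left; simpa using h'
    | cons y a =>
      simp at h; obtain ⟨rfl, rfl⟩ := h; right
      rcases h' with rfl | rfl
      · exact ⟨_, rfl, a, b, rfl, Or.inl rfl⟩
      · exact ⟨_, rfl, a, b, rfl, Or.inr rfl⟩
  · rintro (⟨rfl, h⟩ | ⟨u, rfl, a, b, rfl, h⟩)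
    · exact ⟨[], w, rfl, h⟩
    · exact ⟨x :: a, b, rfl, by simpa using h⟩

theorem lc_cons (a : Ltr) (x : X) (w) : lc a x (a :: w) = x w := by
  simp only [lc, Finsupp.lmapDomain_apply]
  exact Finsupp.mapDomain_apply (List.cons_injective) x w

theorem lc_ne (a : Ltr) (x : X) (w) (h : ∀ u, w ≠ a :: u) : lc a x w = 0 := by
  simp only [lc, Finsupp.lmapDomain_apply]
  apply Finsupp.mapDomain_of_notMem_range
  rintro ⟨u, hu⟩
  exact h u hu.symm

theorem bv_apply (w w') : bv w w' = if w = w' then 1 else 0 := by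
  rw [bv, Finsupp.single_apply]

theorem Dw_apply (w w' : List Ltr) : Dw w w' = if Step w w' then 1 else 0 := by
  induction w generalizing w' with
  | nil => simp [Dw, Step_nil]
  | cons x w ih =>
    have key : lc x (Dw w) w' = if ∃ u, w' = x :: u ∧ Step w u then 1 else 0 := by
      by_cases h : ∃ u, w' = x :: u
      · obtain ⟨u, rfl⟩ := h
        rw [lc_cons, ih]; simp
      · push Not at h
        rw [lc_ne _ _ _ h, if_neg]
        rintro ⟨u, hu, -⟩; exact h u hu
    cases x
    · simp [Dw, key, Step_cons]
    · simp [Dw, key, Step_cons]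
    · simp only [Dw, Finsupp.add_apply, key, Step_cons, bv_apply, true_and]
      by_cases h1 : w' = P :: M :: w
      · subst h1; simp
      by_cases h2 : w' = M :: P :: w
      · subst h2; simp
      simp [h1, h2, Ne.symm h1, Ne.symm h2]

theorem DX_eq (x : X) (w') : DX x w' = x.sum fun w c => if Step w w' then c else 0 := by
  rw [DX, ext, Finsupp.linearCombination_apply, Finsupp.sum, Finsupp.sum, Finsupp.finsetSum_apply]
  apply Finset.sum_congr rfl
  intro w _
  simp [Dw_apply]

/-! ### Words versus configurations -/

def sgn : List Ltr → ℕ → Option Bool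
  | [], _ => none
  | P :: _, 0 => some true
  | P :: w, i + 1 => sgn w i
  | M :: _, 0 => some false
  | M :: w, i + 1 => sgn w i
  | R :: _, 0 => none
  | R :: _, 1 => none
  | R :: w, i + 2 => sgn w i

def red : List Ltr → ℕ → Prop
  | [], _ => False
  | P :: _, 0 => False
  | P :: w, i + 1 => red w i
  | M :: _, 0 => False
  | M :: w, i + 1 => red w i
  | R :: _, 0 => True
  | R :: _, 1 => False
  | R :: w, i + 2 => red w i

theorem red_lt (w : List Ltr) (i : ℕ) (h : red w i) : i + 1 < len w := by
  induction w generalizing i with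
  | nil => simp [red] at h
  | cons a w ih =>
    cases a
    · cases i with
      | zero => simp [red] at h
      | succ i => have := ih i h; simp [len]; omega
    · cases i with
      | zero => simp [red] at h
      | succ i => have := ih i h; simp [len]; omega
    · rcases i with _ | _ | i
      · simp [len]
      · simp [red] at h
      · have := ih i h; simp [len]; omega

theorem red_succ (w : List Ltr) (i : ℕ) (h : red w i) : ¬ red w (i + 1) := by
  induction w generalizing i with
  | nil => simp [red] at h
  | cons a w ih =>
    cases a
    · cases i with
      | zero => simp [red] at h
      | succ i => exact ih i h
    · cases i with
      | zero => simp [red] at h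
      | succ i => exact ih i h
    · rcases i with _ | _ | i
      · simp [red]
      · simp [red] at h
      · exact ih i h

theorem sgn_none (w : List Ltr) (i : ℕ) (hi : i < len w) :
    sgn w i = none ↔ red w i ∨ ∃ j, j + 1 = i ∧ red w j := by
  induction w generalizing i with
  | nil => simp [len] at hi
  | cons a w ih =>
    cases a
    · cases i with
      | zero => simp [red, sgn]
      | succ i =>
        simp only [len] at hi
        simp only [red, sgn, ih i (by omega)]
        apply or_congr Iff.rfl
        constructor
        · rintro ⟨j, rfl, h⟩; exact ⟨j + 1, rfl, h⟩
        · rintro ⟨j, hj, h⟩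
          obtain rfl : j = i := by omega
          cases j with
          | zero => simp [red] at h
          | succ j => exact ⟨j, rfl, h⟩
    · cases i with
      | zero => simp [red, sgn]
      | succ i =>
        simp only [len] at hi
        simp only [red, sgn, ih i (by omega)]
        apply or_congr Iff.rfl
        constructor
        · rintro ⟨j, rfl, h⟩; exact ⟨j + 1, rfl, h⟩
        · rintro ⟨j, hj, h⟩
          obtain rfl : j = i := by omega
          cases j with
          | zero => simp [red] at h
          | succ j => exact ⟨j, rfl, h⟩
    · rcases i with _ | _ | i
      · simp [red, sgn]
      · simp [red, sgn]
      · simp only [len] at hi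
        simp only [red, sgn, ih i (by omega)]
        apply or_congr Iff.rfl
        constructor
        · rintro ⟨j, rfl, h⟩; exact ⟨j + 2, rfl, h⟩
        · rintro ⟨j, hj, h⟩
          obtain rfl : j = i + 1 := by omega
          cases i with
          | zero => simp [red] at h
          | succ j => exact ⟨j, rfl, h⟩

theorem exists_word (n : ℕ) (s : ℕ → Option Bool) (r : ℕ → Prop)
    (h1 : ∀ i, r i → i + 1 < n) (h2 : ∀ i, r i → ¬ r (i + 1))
    (h3 : ∀ i < n, (s i = none ↔ r i ∨ ∃ j, j + 1 = i ∧ r j)) :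
    ∃ w, len w = n ∧ (∀ i < n, sgn w i = s i) ∧ ∀ i, red w i ↔ r i := by
  induction n using Nat.strong_induction_on generalizing s r with
  | _ n ih =>
    rcases n with _ | n
    · exact ⟨[], rfl, by simp, fun i => by simpa [red] using fun h => by simpa using h1 i h⟩
    by_cases hr : r 0
    · have hn := h1 0 hr
      obtain ⟨n, rfl⟩ : ∃ k, n = k + 1 := ⟨n - 1, by omega⟩
      have hr1 := h2 0 hr
      obtain ⟨w, hw1, hw2, hw3⟩ := ih n (by omega) (fun i => s (i + 2)) (fun i => r (i + 2))
        (fun i h => by have := h1 _ h; omega) (fun i h => h2 _ h) (fun i hi => by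
          rw [h3 _ (by omega)]
          apply or_congr Iff.rfl
          constructor
          · rintro ⟨j, hj, h⟩
            rcases j with _ | _ | j
            · omega
            · exact absurd h hr1
            · exact ⟨j, by omega, h⟩
          · rintro ⟨j, rfl, h⟩; exact ⟨j + 2, by omega, h⟩)
      refine ⟨R :: w, by simp [len, hw1], ?_, ?_⟩
      · rintro (_ | _ | i) hi
        · simp only [sgn]; exact ((h3 0 (by omega)).2 (Or.inl hr)).symm
        · simp only [sgn]; exact ((h3 1 (by omega)).2 (Or.inr ⟨0, rfl, hr⟩)).symm
        · exact hw2 i (by omega)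
      · rintro (_ | _ | i)
        · simp [red, hr]
        · simpa [red] using hr1
        · exact hw3 i
    · obtain ⟨w, hw1, hw2, hw3⟩ := ih n (by omega) (fun i => s (i + 1)) (fun i => r (i + 1))
        (fun i h => by have := h1 _ h; omega) (fun i h => h2 _ h) (fun i hi => by
          rw [h3 _ (by omega)]
          apply or_congr Iff.rfl
          constructor
          · rintro ⟨j, hj, h⟩
            rcases j with _ | j
            · exact absurd h hr
            · exact ⟨j, by omega, h⟩
          · rintro ⟨j, rfl, h⟩; exact ⟨j + 1, by omega, h⟩)
      have hs : s 0 ≠ none := by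
        rw [Ne, h3 0 (by omega)]; simp [hr]
      obtain ⟨b, hb⟩ := Option.ne_none_iff_exists'.1 hs
      cases b
      · refine ⟨M :: w, by simp [len, hw1], ?_, ?_⟩
        · rintro (_ | i) hi
          · simp [sgn, hb]
          · exact hw2 i (by omega)
        · rintro (_ | i)
          · simp [red, hr]
          · exact hw3 i
      · refine ⟨P :: w, by simp [len, hw1], ?_, ?_⟩
        · rintro (_ | i) hi
          · simp [sgn, hb]
          · exact hw2 i (by omega)
        · rintro (_ | i)
          · simp [red, hr]
          · exact hw3 i

theorem word_inj (w w' : List Ltr) (hl : len w = len w') (hs : ∀ i < len w, sgn w i = sgn w' i)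
    (hr : ∀ i, red w i ↔ red w' i) : w = w' := by
  induction w generalizing w' with
  | nil =>
    cases w' with
    | nil => rfl
    | cons a w' => cases a <;> simp [len] at hl
  | cons a w ih =>
    cases w' with
    | nil => cases a <;> simp [len] at hl
    | cons b w' =>
      have s0 := hs 0 (by cases a <;> simp [len])
      have r0 := hr 0
      cases a <;> cases b <;> simp [sgn, red] at s0 r0 <;> simp only [len] at hl hs
      · rw [ih w' (by omega) (fun i hi => hs (i + 1) (by omega)) (fun i => hr (i + 1))]
      · rw [ih w' (by omega) (fun i hi => hs (i + 1) (by omega)) (fun i => hr (i + 1))]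
      · rw [ih w' (by omega) (fun i hi => hs (i + 2) (by omega)) (fun i => hr (i + 2))]

theorem len_append (a b : List Ltr) : len (a ++ b) = len a + len b := by
  induction a with
  | nil => simp [len]
  | cons x a ih => cases x <;> simp [len, ih] <;> omega

theorem nM_append (a b : List Ltr) : nM (a ++ b) = nM a + nM b := by
  induction a with
  | nil => simp [nM]
  | cons x a ih => cases x <;> simp [nM, ih] <;> omega

theorem nR_append (a b : List Ltr) : nR (a ++ b) = nR a + nR b := by
  induction a with
  | nil => simp [nR]
  | cons x a ih => cases x <;> simp [nR, ih] <;> omega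

theorem sgn_append_left (a b : List Ltr) (i : ℕ) (h : i < len a) : sgn (a ++ b) i = sgn a i := by
  induction a generalizing i with
  | nil => simp [len] at h
  | cons x a ih =>
    cases x <;> rcases i with _ | _ | i <;> simp [len] at h <;> simp [sgn] <;> apply ih <;> omega

theorem sgn_append_right (a b : List Ltr) (i : ℕ) : sgn (a ++ b) (len a + i) = sgn b i := by
  induction a generalizing i with
  | nil => simp [len]
  | cons x a ih =>
    cases x
    · rw [← ih, show len (P :: a) + i = (len a + i) + 1 by simp [len]; omega]; rfl
    · rw [← ih, show len (M :: a) + i = (len a + i) + 1 by simp [len]; omega]; rfl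
    · rw [← ih, show len (R :: a) + i = (len a + i) + 2 by simp [len]; omega]; rfl

theorem red_append_left (a b : List Ltr) (i : ℕ) (h : i < len a) : red (a ++ b) i ↔ red a i := by
  induction a generalizing i with
  | nil => simp [len] at h
  | cons x a ih =>
    cases x <;> rcases i with _ | _ | i <;> simp [len] at h <;> simp [red] <;> apply ih <;> omega

theorem red_append_right (a b : List Ltr) (i : ℕ) : red (a ++ b) (len a + i) ↔ red b i := by
  induction a generalizing i with
  | nil => simp [len]
  | cons x a ih =>
    cases x
    · rw [← ih, show len (P :: a) + i = (len a + i) + 1 by simp [len]; omega]; rfl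
    · rw [← ih, show len (M :: a) + i = (len a + i) + 1 by simp [len]; omega]; rfl
    · rw [← ih, show len (R :: a) + i = (len a + i) + 2 by simp [len]; omega]; rfl

theorem red_split (w : List Ltr) (i : ℕ) (h : red w i) : ∃ a b, w = a ++ R :: b ∧ len a = i := by
  induction w generalizing i with
  | nil => simp [red] at h
  | cons x w ih =>
    cases x
    · cases i with
      | zero => simp [red] at h
      | succ i =>
        obtain ⟨a, b, rfl, rfl⟩ := ih i h
        exact ⟨P :: a, b, rfl, rfl⟩
    · cases i with
      | zero => simp [red] at h
      | succ i =>
        obtain ⟨a, b, rfl, rfl⟩ := ih i h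
        exact ⟨M :: a, b, rfl, rfl⟩
    · rcases i with _ | _ | i
      · exact ⟨[], w, rfl, rfl⟩
      · simp [red] at h
      · obtain ⟨a, b, rfl, rfl⟩ := ih i h
        exact ⟨R :: a, b, rfl, rfl⟩

theorem Step_len {w w'} (h : Step w w') : len w' = len w := by
  obtain ⟨a, b, rfl, rfl | rfl⟩ := h <;> simp [len_append, len]
theorem Step_nM {w w'} (h : Step w w') : nM w' = nM w + 1 := by
  obtain ⟨a, b, rfl, rfl | rfl⟩ := h <;> simp [nM_append, nM] <;> omega
theorem Step_nR {w w'} (h : Step w w') : nR w = nR w' + 1 := by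
  obtain ⟨a, b, rfl, rfl | rfl⟩ := h <;> simp [nR_append, nR] <;> omega

/-- function-level description of a step -/
def FStep (w w' : List Ltr) : Prop :=
  ∃ i, red w i ∧ (∀ j, red w' j ↔ red w j ∧ j ≠ i) ∧
    (∀ j < len w, j ≠ i → j ≠ i + 1 → sgn w' j = sgn w j) ∧
    ((sgn w' i = some true ∧ sgn w' (i + 1) = some false) ∨
     (sgn w' i = some false ∧ sgn w' (i + 1) = some true))

theorem cmp_words (a b : List Ltr) (x y : Ltr) (hx : x = P ∧ y = M ∨ x = M ∧ y = P) :
    (∀ j, red (a ++ x :: y :: b) j ↔ red (a ++ R :: b) j ∧ j ≠ len a) ∧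
    (∀ j, j ≠ len a → j ≠ len a + 1 → sgn (a ++ x :: y :: b) j = sgn (a ++ R :: b) j) ∧
    sgn (a ++ x :: y :: b) (len a) = sgn [x] 0 ∧
    sgn (a ++ x :: y :: b) (len a + 1) = sgn [y] 0 := by
  refine ⟨fun j => ?_, fun j h1 h2 => ?_, ?_, ?_⟩
  · rcases lt_or_ge j (len a) with h | h
    · rw [red_append_left _ _ _ h, red_append_left _ _ _ h]
      simp [h.ne]
    · obtain ⟨j, rfl⟩ := Nat.exists_eq_add_of_le h
      rw [red_append_right, red_append_right]
      rcases hx with ⟨rfl, rfl⟩ | ⟨rfl, rfl⟩ <;> rcases j with _ | _ | j <;> simp [red]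
  · rcases lt_or_ge j (len a) with h | h
    · rw [sgn_append_left _ _ _ h, sgn_append_left _ _ _ h]
    · obtain ⟨j, rfl⟩ := Nat.exists_eq_add_of_le h
      rw [sgn_append_right, sgn_append_right]
      rcases hx with ⟨rfl, rfl⟩ | ⟨rfl, rfl⟩ <;> rcases j with _ | _ | j <;> simp [sgn] at h1 h2 ⊢
  · have := sgn_append_right a (x :: y :: b) 0
    rw [add_zero] at this
    rw [this]
    rcases hx with ⟨rfl, rfl⟩ | ⟨rfl, rfl⟩ <;> simp [sgn]
  · rw [sgn_append_right]
    rcases hx with ⟨rfl, rfl⟩ | ⟨rfl, rfl⟩ <;> simp [sgn]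

theorem red_mid (a b : List Ltr) : red (a ++ R :: b) (len a) := by
  have := (red_append_right a (R :: b) 0).2 trivial
  simpa using this

theorem Step_iff (w w' : List Ltr) (hl : len w = len w') : Step w w' ↔ FStep w w' := by
  constructor
  · rintro ⟨a, b, rfl, rfl | rfl⟩
    · obtain ⟨h1, h2, h3, h4⟩ := cmp_words a b P M (by simp)
      exact ⟨len a, red_mid a b, h1, fun j _ => h2 j, Or.inl ⟨h3, h4⟩⟩
    · obtain ⟨h1, h2, h3, h4⟩ := cmp_words a b M P (by simp)
      exact ⟨len a, red_mid a b, h1, fun j _ => h2 j, Or.inr ⟨h3, h4⟩⟩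
  · rintro ⟨i, hi, hr, hs, h⟩
    obtain ⟨a, b, rfl, rfl⟩ := red_split w i hi
    refine ⟨a, b, rfl, ?_⟩
    rcases h with ⟨h5, h6⟩ | ⟨h5, h6⟩
    · left
      obtain ⟨h1, h2, h3, h4⟩ := cmp_words a b P M (by simp)
      apply word_inj
      · rw [← hl]; simp [len_append, len]
      · intro j hj
        by_cases e1 : j = len a
        · rw [e1, h5, h3]; rfl
        by_cases e2 : j = len a + 1
        · rw [e2, h6, h4]; rfl
        rw [h2 j e1 e2, hs j (hl ▸ hj) e1 e2]
      · intro j; rw [hr, h1]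
    · right
      obtain ⟨h1, h2, h3, h4⟩ := cmp_words a b M P (by simp)
      apply word_inj
      · rw [← hl]; simp [len_append, len]
      · intro j hj
        by_cases e1 : j = len a
        · rw [e1, h5, h3]; rfl
        by_cases e2 : j = len a + 1
        · rw [e2, h6, h4]; rfl
        rw [h2 j e1 e2, hs j (hl ▸ hj) e1 e2]
      · intro j; rw [hr, h1]

theorem card_sgn (w : List Ltr) :
    ((Finset.range (len w)).filter fun i => sgn w i = some false).card = nM w := by
  simp only [Finset.card_filter]
  induction w with
  | nil => simp [len, nM]
  | cons a w ih =>
    cases a <;> simp only [len, nM, Finset.sum_range_succ', sgn] <;> simp <;> exact ih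

theorem card_red (w : List Ltr) :
    ((Finset.range (len w)).filter fun i => red w i).card = nR w := by
  simp only [Finset.card_filter]
  induction w with
  | nil => simp [len, nR]
  | cons a w ih =>
    cases a <;> simp only [len, nR, Finset.sum_range_succ', red] <;> simp <;> exact ih

theorem mem_er {α : Type*} {inst : DecidableEq α} {a b : α} {s : Finset α} :
    a ∈ @Finset.erase α inst s b ↔ a ≠ b ∧ a ∈ s := Finset.mem_erase

section path

variable {n : ℕ}

/-- the `i`-th edge of the path -/
def edge (i : ℕ) (h : i + 1 < n) : Sym2 (Fin n) := s(⟨i, by omega⟩, ⟨i + 1, h⟩)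

theorem mem_edge (i : ℕ) (h : i + 1 < n) (v : Fin n) :
    v ∈ edge i h ↔ v.val = i ∨ v.val = i + 1 := by
  simp [edge, Fin.ext_iff]

theorem edge_inj {i j : ℕ} (h : i + 1 < n) (h' : j + 1 < n) (e : edge i h = edge j h') : i = j := by
  have h1 := (mem_edge j h' ⟨i, by omega⟩).1 (e ▸ (mem_edge i h _).2 (Or.inl rfl))
  have h2 := (mem_edge j h' ⟨i + 1, by omega⟩).1 (e ▸ (mem_edge i h _).2 (Or.inr rfl))
  simp at h1 h2
  omega

theorem edge_mem (i : ℕ) (h : i + 1 < n) : edge i h ∈ (SimpleGraph.pathGraph n).edgeSet := by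
  simp [edge, SimpleGraph.pathGraph_adj]

theorem exists_edge (e : Sym2 (Fin n)) (he : e ∈ (SimpleGraph.pathGraph n).edgeSet) :
    ∃ i, ∃ h : i + 1 < n, e = edge i h := by
  induction e using Sym2.ind with
  | _ u v =>
    rw [SimpleGraph.mem_edgeSet, SimpleGraph.pathGraph_adj] at he
    rcases he with he | he
    · refine ⟨u, by omega, ?_⟩
      rw [edge]; congr 2; exact Fin.ext he.symm
    · refine ⟨v, by omega, ?_⟩
      rw [edge, Sym2.eq_swap]; congr 2; exact Fin.ext he.symm

abbrev PC (n : ℕ) : Type := Config (SimpleGraph.pathGraph n)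

def rC (C : PC n) (i : ℕ) : Prop := ∃ h : i + 1 < n, edge i h ∈ C.red

/-- the word `w` represents the configuration `C` -/
def Rep (w : List Ltr) (C : PC n) : Prop :=
  len w = n ∧ (∀ i (h : i < n), sgn w i = C.sign ⟨i, h⟩) ∧ ∀ i, red w i ↔ rC C i

theorem config_ext_s14 {C C' : PC n} (h1 : C.red = C'.red) (h2 : C.sign = C'.sign) : C = C' := by
  cases C; cases C'; simp at h1 h2; subst h1; subst h2; rfl

theorem exists_rep (C : PC n) : ∃ w, Rep w C := by
  obtain ⟨w, h1, h2, h3⟩ := exists_word n (fun i => if h : i < n then C.sign ⟨i, h⟩ else none) (rC C)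
    (fun i h => h.1) (fun i h h' => by
      obtain ⟨a, ha⟩ := h
      obtain ⟨b, hb⟩ := h'
      refine C.matching.2 _ ha _ hb (fun e => ?_) ⟨i + 1, a⟩ ((mem_edge _ _ _).2 (Or.inr rfl))
        ((mem_edge _ _ _).2 (Or.inl rfl))
      have := edge_inj _ _ e
      omega)
    (fun i hi => by
      simp only [hi, dif_pos]
      rw [C.sign_none]
      constructor
      · rintro ⟨e, he, hv⟩
        obtain ⟨j, hj, rfl⟩ := exists_edge e (C.matching.1 e he)
        rw [mem_edge] at hv
        simp at hv
        rcases hv with rfl | rfl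
        · exact Or.inl ⟨hj, he⟩
        · exact Or.inr ⟨j, rfl, hj, he⟩
      · rintro (⟨h, he⟩ | ⟨j, rfl, h, he⟩)
        · exact ⟨_, he, (mem_edge _ _ _).2 (Or.inl rfl)⟩
        · exact ⟨_, he, (mem_edge _ _ _).2 (Or.inr rfl)⟩)
  exact ⟨w, h1, fun i hi => by simpa [hi] using h2 i hi, h3⟩

theorem rep_word_unique {w w' : List Ltr} {C : PC n} (h : Rep w C) (h' : Rep w' C) : w = w' := by
  apply word_inj
  · rw [h.1, h'.1]
  · intro i hi
    have hi : i < n := h.1 ▸ hi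
    rw [h.2.1 i hi, h'.2.1 i hi]
  · intro i; rw [h.2.2, h'.2.2]

theorem rep_config_unique {w : List Ltr} {C C' : PC n} (h : Rep w C) (h' : Rep w C') : C = C' := by
  apply config_ext_s14
  · have key : ∀ C C' : PC n, Rep w C → Rep w C' → C.red ⊆ C'.red := by
      intro C C' h h' e he
      obtain ⟨j, hj, rfl⟩ := exists_edge e (C.matching.1 e he)
      exact ((h'.2.2 j).1 ((h.2.2 j).2 ⟨hj, he⟩)).2
    exact (key _ _ h h').antisymm (key _ _ h' h)
  · funext i
    rw [← h.2.1 i.1 i.2, ← h'.2.1 i.1 i.2]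

theorem exists_config (w : List Ltr) (hw : len w = n) : ∃ C : PC n, Rep w C := by
  have hmem : ∀ e : Sym2 (Fin n), e ∈ (Finset.univ.filter fun e : Sym2 (Fin n) =>
      ∃ i, ∃ h : i + 1 < n, e = edge i h ∧ red w i) ↔ ∃ i, ∃ h : i + 1 < n, e = edge i h ∧ red w i := by
    intro e; simp
  refine ⟨⟨Finset.univ.filter fun e : Sym2 (Fin n) => ∃ i, ∃ h : i + 1 < n, e = edge i h ∧ red w i,
    ⟨?_, ?_⟩, fun i => sgn w i, ?_⟩, hw, fun i h => rfl, ?_⟩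
  · intro e he
    obtain ⟨i, h, rfl, -⟩ := (hmem e).1 he
    exact edge_mem i h
  · intro e he f hf hne v hv hv'
    obtain ⟨i, h, rfl, hi⟩ := (hmem e).1 he
    obtain ⟨j, h', rfl, hj⟩ := (hmem f).1 hf
    rw [mem_edge] at hv hv'
    have hij : i ≠ j := by rintro rfl; exact hne rfl
    have : i = j + 1 ∨ j = i + 1 := by omega
    rcases this with rfl | rfl
    · exact red_succ w _ hj hi
    · exact red_succ w _ hi hj
  · intro v
    rw [sgn_none w v (hw ▸ v.2)]
    constructor
    · rintro (h | ⟨j, hj, h⟩)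
      · have := red_lt _ _ h
        rw [hw] at this
        exact ⟨edge v this, (hmem _).2 ⟨_, _, rfl, h⟩, (mem_edge _ _ _).2 (Or.inl rfl)⟩
      · have := red_lt _ _ h
        rw [hw] at this
        exact ⟨edge j this, (hmem _).2 ⟨_, _, rfl, h⟩, (mem_edge _ _ _).2 (Or.inr hj.symm)⟩
    · rintro ⟨e, he, hv⟩
      obtain ⟨i, h, rfl, hi⟩ := (hmem e).1 he
      rcases (mem_edge _ _ _).1 hv with hv | hv
      · left; rw [hv]; exact hi
      · right; exact ⟨i, hv.symm, hi⟩
  · intro i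
    constructor
    · intro h
      have := red_lt _ _ h
      rw [hw] at this
      exact ⟨this, (hmem _).2 ⟨_, _, rfl, h⟩⟩
    · rintro ⟨h, he⟩
      obtain ⟨j, h', e, hj⟩ := (hmem _).1 he
      rwa [edge_inj _ _ e]

theorem rep_step {w w' : List Ltr} {C C' : PC n} (h : Rep w C) (h' : Rep w' C') :
    DStep C C' ↔ Step w w' := by
  rw [Step_iff w w' (by rw [h.1, h'.1])]
  constructor
  · rintro ⟨e, he, hr, hs, u, v, huv, hu, hv⟩
    obtain ⟨i, hi, rfl⟩ := exists_edge e (C.matching.1 e he)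
    refine ⟨i, (h.2.2 i).2 ⟨hi, he⟩, ?_, ?_, ?_⟩
    · intro j
      rw [h.2.2, h'.2.2]
      constructor
      · rintro ⟨hj, hj'⟩
        rw [hr, mem_er] at hj'
        exact ⟨⟨hj, hj'.2⟩, by rintro rfl; exact hj'.1 rfl⟩
      · rintro ⟨⟨hj, hj'⟩, hne⟩
        refine ⟨hj, ?_⟩
        rw [hr, mem_er]
        exact ⟨fun e => hne (edge_inj _ _ e), hj'⟩
    · intro j hj h1 h2
      have hj : j < n := h.1 ▸ hj
      rw [h.2.1 j hj, h'.2.1 j hj]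
      apply hs
      rw [mem_edge]
      simp [h1, h2]
    · rw [h'.2.1 i (by omega), h'.2.1 (i + 1) hi]
      rw [edge, Sym2.eq_iff] at huv
      rcases huv with ⟨rfl, rfl⟩ | ⟨rfl, rfl⟩
      · exact Or.inl ⟨hu, hv⟩
      · exact Or.inr ⟨hv, hu⟩
  · rintro ⟨i, hi, hr, hs, hsg⟩
    obtain ⟨hin, he⟩ := (h.2.2 i).1 hi
    refine ⟨edge i hin, he, ?_, ?_, ?_⟩
    · ext e
      rw [mem_er]
      constructor
      · intro hh
        obtain ⟨j, hj, rfl⟩ := exists_edge e (C'.matching.1 e hh)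
        obtain ⟨h1, h2⟩ := (hr j).1 ((h'.2.2 j).2 ⟨hj, hh⟩)
        exact ⟨fun e => h2 (edge_inj _ _ e), ((h.2.2 j).1 h1).2⟩
      · rintro ⟨hne, hh⟩
        obtain ⟨j, hj, rfl⟩ := exists_edge e (C.matching.1 e hh)
        exact ((h'.2.2 j).1 ((hr j).2 ⟨(h.2.2 j).2 ⟨hj, hh⟩, by rintro rfl; exact hne rfl⟩)).2
    · intro x hx
      rw [mem_edge] at hx
      push Not at hx
      have := hs x (h.1.symm ▸ x.2) hx.1 hx.2
      rwa [h.2.1 x x.2, h'.2.1 x x.2] at this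
    · rw [h'.2.1 i (by omega), h'.2.1 (i + 1) hin] at hsg
      rcases hsg with ⟨h1, h2⟩ | ⟨h1, h2⟩
      · exact ⟨_, _, rfl, h1, h2⟩
      · exact ⟨_, _, Sym2.eq_swap, h2, h1⟩

theorem rep_Qg {w : List Ltr} {C : PC n} (h : Rep w C) : Qg C = nM w := by
  rw [← card_sgn, Qg]
  refine Finset.card_bij (fun v _ => v.val) ?_ ?_ ?_
  · intro v hv
    rw [Finset.mem_filter] at hv ⊢
    rw [Finset.mem_range, h.1, h.2.1 v v.2]
    exact ⟨v.2, hv.2⟩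
  · intro a _ b _ hab; exact Fin.ext hab
  · intro i hi
    rw [Finset.mem_filter, Finset.mem_range, h.1] at hi
    refine ⟨⟨i, hi.1⟩, ?_, rfl⟩
    rw [Finset.mem_filter, ← h.2.1 i hi.1]
    exact ⟨Finset.mem_univ _, hi.2⟩

theorem rep_red {w : List Ltr} {C : PC n} (h : Rep w C) : C.red.card = nR w := by
  rw [← card_red]
  symm
  have hm : ∀ i, i ∈ (Finset.range (len w)).filter (fun i => red w i) → rC C i := by
    intro i hi
    exact (h.2.2 i).1 (Finset.mem_filter.1 hi).2
  refine Finset.card_bij (fun i hi => edge i (hm i hi).1) ?_ ?_ ?_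
  · intro i hi; exact (hm i hi).2
  · intro a _ b _ hab; exact edge_inj _ _ hab
  · intro e he
    obtain ⟨j, hj, rfl⟩ := exists_edge e (C.matching.1 e he)
    refine ⟨j, ?_, rfl⟩
    rw [Finset.mem_filter, Finset.mem_range, h.1]
    exact ⟨by omega, (h.2.2 j).2 ⟨hj, he⟩⟩

theorem rep_Eg {w : List Ltr} {C : PC n} (h : Rep w C) : Eg C = nM w + nR w := by
  rw [Eg, rep_Qg h, rep_red h]

noncomputable def wd (C : PC n) : List Ltr := (exists_rep C).choose

theorem wd_rep (C : PC n) : Rep (wd C) C := (exists_rep C).choose_spec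

theorem wd_inj {C C' : PC n} (h : wd C = wd C') : C = C' :=
  rep_config_unique (wd_rep C) (h ▸ wd_rep C')

theorem exists_wd (w : List Ltr) (h : len w = n) : ∃ C : PC n, wd C = w := by
  obtain ⟨C, hC⟩ := exists_config w h
  exact ⟨C, rep_word_unique (wd_rep C) hC⟩

theorem wd_step (C C' : PC n) : DStep C C' ↔ Step (wd C) (wd C') := rep_step (wd_rep C) (wd_rep C')

/-- the graded basis -/
abbrev GB (n : ℕ) (k m : ℤ) : Type :=
  {C : PC n // (Qg C : ℤ) = k ∧ (Eg C : ℤ) = m}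

abbrev SP (n : ℕ) (k m : ℤ) : Type := SC (SimpleGraph.pathGraph n) k m

/-- inclusion into the word model -/
noncomputable def inc (k m : ℤ) : SP n k m →ₗ[ZMod 2] X :=
  ∑ C : GB n k m, (LinearMap.proj C).smulRight (bv (wd C.1))

theorem inc_apply (k m : ℤ) (v : SP n k m) : inc k m v = ∑ C : GB n k m, v C • bv (wd C.1) := by
  simp [inc, LinearMap.sum_apply]

/-- restriction from the word model -/
noncomputable def res (k m : ℤ) : X →ₗ[ZMod 2] SP n k m where
  toFun x C := x (wd C.1)
  map_add' _ _ := rfl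
  map_smul' _ _ := rfl

theorem res_apply (k m : ℤ) (x : X) (C : GB n k m) : res k m x C = x (wd C.1) := rfl

theorem Dgr_apply (k m k' : ℤ) (v : SP n k m) (C' : GB n k' m) :
    Dgr (SimpleGraph.pathGraph n) k m k' m v C' =
      ∑ C : GB n k m, if DStep C.1 C'.1 then v C else 0 := rfl

theorem res_inc (k m : ℤ) (v : SP n k m) : res k m (inc k m v) = v := by
  funext C
  simp only [res_apply, inc_apply, Finsupp.finsetSum_apply,
    Finsupp.smul_apply, bv_apply]
  rw [Finset.sum_eq_single C]
  · simp
  · intro C' _ hne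
    rw [if_neg, smul_zero]
    intro e
    exact hne (Subtype.ext (wd_inj e))
  · simp

theorem inc_supp (k m : ℤ) (v : SP n k m) (w : List Ltr)
    (hw : ∀ C : GB n k m, wd C.1 ≠ w) : inc k m v w = 0 := by
  simp only [inc_apply, Finsupp.finsetSum_apply, Finsupp.smul_apply, bv_apply]
  apply Finset.sum_eq_zero
  intro C _
  rw [if_neg (hw C), smul_zero]

theorem grade_step {w : List Ltr} {k m : ℤ} {C' : PC n} (hs : Step w (wd C')) (h1 : (Qg C' : ℤ) = k + 1)
    (h2 : (Eg C' : ℤ) = m) : ∃ C : GB n k m, wd C.1 = w := by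
  have hr := wd_rep C'
  obtain ⟨C, rfl⟩ := exists_wd (n := n) w (by rw [← Step_len hs, hr.1])
  have := Step_nM hs
  have := Step_nR hs
  rw [rep_Qg hr] at h1
  rw [rep_Eg hr] at h2
  refine ⟨⟨C, ?_, ?_⟩, rfl⟩
  · rw [rep_Qg (wd_rep C)]; omega
  · rw [rep_Eg (wd_rep C)]; omega

theorem res_D (k k' m : ℤ) (hk : k' = k + 1) (x : X) :
    (res k' m (DX x) : SP n k' m) = Dgr (SimpleGraph.pathGraph n) k m k' m (res k m x) := by
  refine lin_ext (f := res k' m ∘ₗ DX)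
    (g := Dgr (SimpleGraph.pathGraph n) k m k' m ∘ₗ res k m) (fun w => ?_) x
  funext C'
  subst hk
  simp only [LinearMap.comp_apply, res_apply, Dgr_apply, DX_bv, Dw_apply]
  by_cases hs : Step w (wd C'.1)
  · rw [if_pos hs]
    obtain ⟨C, rfl⟩ := grade_step hs C'.2.1 C'.2.2
    rw [Finset.sum_eq_single C]
    · rw [if_pos ((wd_step _ _).2 hs), bv_apply, if_pos rfl]
    · intro C1 _ hne
      have e : wd C.1 ≠ wd C1.1 := fun e => hne (Subtype.ext (wd_inj e.symm))
      rw [bv_apply, if_neg e, ite_self]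
    · simp
  · rw [if_neg hs]
    symm
    apply Finset.sum_eq_zero
    intro C _
    by_cases e : w = wd C.1
    · rw [if_neg]
      rw [wd_step, ← e]; exact hs
    · rw [bv_apply, if_neg e, ite_self]

theorem D_inc (k k' m : ℤ) (hk : k' = k + 1) (v : SP n k m) :
    DX (inc k m v) = inc k' m (Dgr (SimpleGraph.pathGraph n) k m k' m v) := by
  ext w
  by_cases hw : ∃ C : GB n k' m, wd C.1 = w
  · obtain ⟨C, rfl⟩ := hw
    have h1 := congrFun (res_D k k' m hk (inc k m v)) C
    rw [res_inc] at h1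
    have h2 := congrFun (res_inc k' m (Dgr (SimpleGraph.pathGraph n) k m k' m v)) C
    exact h1.trans h2.symm
  · push Not at hw
    rw [inc_supp _ _ _ _ hw, DX_eq]
    apply Finset.sum_eq_zero
    intro u hu
    refine if_neg ?_
    intro hs
    rw [Finsupp.mem_support_iff] at hu
    apply hu
    apply inc_supp
    rintro C rfl
    have hr := wd_rep C.1
    obtain ⟨C', rfl⟩ := exists_wd (n := n) w (by rw [Step_len hs, hr.1])
    have e1 := Step_nM hs
    have e2 := Step_nR hs
    have h1 := C.2.1
    have h2 := C.2.2
    rw [rep_Qg hr] at h1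
    rw [rep_Eg hr] at h2
    refine hw ⟨C', ?_, ?_⟩ rfl
    · rw [rep_Qg (wd_rep C')]; omega
    · rw [rep_Eg (wd_rep C')]; omega

/-- the counting functional -/
noncomputable def tot (k m : ℤ) : SP n k m →ₗ[ZMod 2] ZMod 2 := ∑ C : GB n k m, LinearMap.proj C

theorem tot_apply (k m : ℤ) (v : SP n k m) : tot k m v = ∑ C : GB n k m, v C := by
  simp [tot, LinearMap.sum_apply]

theorem pi_ne (k m : ℤ) (h : k ≠ m) (v : SP n k m) : piX (inc k m v) = 0 := by
  rw [inc_apply, map_sum]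
  apply Finset.sum_eq_zero
  intro C _
  rw [map_smul, piX_bv, piw_ne, smul_zero]
  have h1 := C.2.1
  have h2 := C.2.2
  rw [rep_Qg (wd_rep C.1)] at h1
  rw [rep_Eg (wd_rep C.1)] at h2
  omega

theorem pi_eq (k : ℕ) (v : SP n k k) : piX (inc k k v) = tot k k v • bv (srt (n - k) k) := by
  rw [inc_apply, map_sum, tot_apply, Finset.sum_smul]
  apply Finset.sum_congr rfl
  intro C _
  have h1 := C.2.1
  have h2 := C.2.2
  have h3 := (wd_rep C.1).1
  rw [rep_Qg (wd_rep C.1)] at h1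
  rw [rep_Eg (wd_rep C.1)] at h2
  rw [map_smul, piX_bv, piw_zero _ (by omega), h3, show nM (wd C.1) = k by omega]

theorem exact_of_pi (k m : ℤ) (v : SP n k m) (hp : piX (inc k m v) = 0)
    (hv : Dgr (SimpleGraph.pathGraph n) k m (k + 1) m v = 0) :
    v ∈ LinearMap.range (Dgr (SimpleGraph.pathGraph n) (k - 1) m k m) := by
  have h := homotopy (inc k m v)
  rw [D_inc k (k + 1) m rfl, hv, hp, map_zero, map_zero, add_zero, add_zero] at h
  refine ⟨res (k - 1) m (hX (inc k m v)), ?_⟩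
  rw [← res_D (k - 1) k m (by ring), h, res_inc]

theorem srt_data (a b : ℕ) : len (srt a b) = a + b ∧ nM (srt a b) = b ∧ nR (srt a b) = 0 := by
  induction a with
  | zero =>
    induction b with
    | zero => simp [srt, len, nM, nR]
    | succ b ih =>
      simp only [srt, List.replicate_succ, List.replicate_zero, List.nil_append, len, nM, nR] at ih ⊢
      omega
  | succ a ih =>
    rw [← srt_cons]; simp only [len, nM, nR]; omega

end path

/-- the Seifert cohomology of the Dynkin diagram `A_n` (the path on `n`
vertices): `dim SH^k(A_n,m) = 1` iff `k = m` and `0 ≤ k ≤ n`, and `0` otherwise. -/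
theorem SHdim_pathGraph (n : ℕ) (hn : 1 ≤ n) (k m : ℤ) :
    SHdim (SimpleGraph.pathGraph n) k m =
      if k = m ∧ 0 ≤ k ∧ k ≤ (n : ℤ) then 1 else 0 := by
  rw [SHdim, cohDim]
  by_cases hkm : k = m
  · subst hkm
    by_cases hk : 0 ≤ k ∧ k ≤ (n : ℤ)
    · rw [if_pos ⟨rfl, hk⟩]
      obtain ⟨k, rfl⟩ := Int.eq_ofNat_of_zero_le hk.1
      have hkn : k ≤ n := by exact_mod_cast hk.2
      set g := Dgr (SimpleGraph.pathGraph n) (k : ℤ) k (k + 1) k with hg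
      have hg0 : ∀ v, g v = 0 := by
        intro v
        funext C
        exfalso
        have h1 := C.2.1
        have h2 := C.2.2
        rw [Eg] at h2
        push_cast at h2
        omega
      let φ : LinearMap.ker g →ₗ[ZMod 2] ZMod 2 := tot (n := n) k k ∘ₗ (LinearMap.ker g).subtype
      have hbv : ∀ w, bv w ≠ 0 := by
        intro w h
        have := DFunLike.congr_fun h w
        rw [bv_apply, if_pos rfl] at this
        exact one_ne_zero this
      have hker : (LinearMap.range (Dgr (SimpleGraph.pathGraph n) ((k : ℤ) - 1) k k k)).comap
          (LinearMap.ker g).subtype = LinearMap.ker φ := by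
        ext v
        rw [Submodule.mem_comap, LinearMap.mem_ker]
        constructor
        · rintro ⟨u, hu⟩
          have h1 := pi_eq (n := n) k ((LinearMap.ker g).subtype v)
          rw [← hu, ← D_inc ((k : ℤ) - 1) k k (by ring), piX_D, hu] at h1
          exact (smul_eq_zero.1 h1.symm).resolve_right (hbv _)
        · intro hv
          apply exact_of_pi
          · rw [pi_eq]
            have : tot (n := n) k k ((LinearMap.ker g).subtype v) = 0 := hv
            rw [this, zero_smul]
          · exact hg0 _
      have hsurj : Function.Surjective φ := by
        obtain ⟨C, hC⟩ := exists_wd (n := n) (srt (n - k) k) (by rw [(srt_data _ _).1]; omega)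
        have hd := srt_data (n - k) k
        have c1 : (Qg C : ℤ) = k := by rw [rep_Qg (wd_rep C), hC, hd.2.1]
        have c2 : (Eg C : ℤ) = k := by rw [rep_Eg (wd_rep C), hC, hd.2.1, hd.2.2, add_zero]
        intro c
        refine ⟨⟨Pi.single (⟨C, c1, c2⟩ : GB n k k) c, hg0 _⟩, ?_⟩
        change tot (n := n) k k _ = c
        rw [tot_apply]
        exact Finset.sum_pi_single' _ _ _ |>.trans (by simp)
      rw [hker, (φ.quotKerEquivOfSurjective hsurj).finrank_eq, Module.finrank_self]
    · rw [if_neg (fun h => hk h.2)]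
      have : IsEmpty (GB n k k) := ⟨fun C => hk (by
        have h1 := C.2.1
        have := nM_le (wd C.1)
        rw [(wd_rep C.1).1] at this
        rw [rep_Qg (wd_rep C.1)] at h1
        omega)⟩
      exact Module.finrank_zero_of_subsingleton
  · rw [if_neg (fun h => hkm h.1)]
    have : (LinearMap.range (Dgr (SimpleGraph.pathGraph n) (k - 1) m k m)).comap
        (LinearMap.ker (Dgr (SimpleGraph.pathGraph n) k m (k + 1) m)).subtype = ⊤ := by
      rw [eq_top_iff]
      rintro v -
      exact exact_of_pi k m v.1 (pi_ne k m hkm _) v.2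
    rw [this]
    exact Module.finrank_zero_of_subsingleton

end Seifert
end
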